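/- Let k be a field and let r ≥ 1 and n₁,…,n_r be positive integers. Then there exist a field extension k ⊆ K and central division algebras A₁,…,A_r over K with deg(Aⱼ) = nⱼ such that for all integers k₁,…,k_r, the index of the Brauer class k₁[A₁] + ⋯ + k_r[A_r] ∈ Br(K) equals ∏ⱼ nⱼ/gcd(nⱼ,kⱼ): that is, every central division algebra over K whose Brauer class equals k₁[A₁] + ⋯ + k_r[A_r] has degree ∏ⱼ nⱼ/gcd(nⱼ,kⱼ). -/

import Mathlib

/-!
STATEMENT 9: Let `k` be a field, `r ≥ 1` and `n₁,…,n_r` positive integers.  Then there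
are a field extension `k ⊆ K` and central division algebras `A₁,…,A_r` over `K` with
`deg Aⱼ = nⱼ` such that for all integers `κ₁,…,κ_r`, every central division algebra `B`
over `K` whose Brauer class equals `κ₁[A₁] + ⋯ + κ_r[A_r]` has degree
`∏ⱼ nⱼ/gcd(nⱼ,κⱼ)`.

The condition `[B] = κ₁[A₁] + ⋯ + κ_r[A_r]` in `Br(K)` is expressed by moving the
negative-exponent factors to the left-hand side:
`B ⊗ ⨂ⱼ Aⱼ^{⊗(κⱼ)⁻}` is Brauer equivalent (isomorphic after tensoring with matrix
algebras) to `⨂ⱼ Aⱼ^{⊗(κⱼ)⁺}`, where `(κⱼ)⁺ = max(κⱼ,0)` and `(κⱼ)⁻ = max(-κⱼ,0)`.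
-/

open scoped TensorProduct

universe u

/-!
Fix the lattice `Γ = ℤ^r`, its quotient `G = ∏ ℤ/nⱼ`, acting faithfully on some field `F ⊇ k`, and
the kernel `N` of `Γ → G`. Let `M` be the field of Hahn series over `F` with exponents in `N`, on
which `G` acts through the coefficients, and `K = M^G`. The monomials of `M` give a character
`τ : N → Kˣ`. For `κ ∈ ℤ^r`, pulling `τ` back along multiplication by `κⱼ` in each coordinate gives
a character of a subgroup of `Γ` of index `∏ nⱼ/gcd(nⱼ,κⱼ)`, and its crossed product with `M` has
this index as its degree. Elements of `M` have their valuation in `N`, so the terms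
`c • (translation by γ)` of an operator, for `γ` in distinct cosets, change valuations by different
amounts; the term of least valuation cannot cancel, and the crossed product is a domain.

Additivity of the classes in `κ` is Galois descent: functions on `Γ^m` which are quasi-periodic for
several characters of product one descend to a `K`-space on which the crossed products act with
commuting images, and whose dimension is the product of their degrees. If `B` has the same class as
the crossed product `D` of degree `δ`, then splitting matrix algebras off such a space leaves a
space that is acted on by both `B` and the opposite of `D` and has dimension `v` with
`v ^ 2 = dim B * δ ^ 2`. As `dim B` and `δ ^ 2` divide `v`, they are equal.
-/

namespace BrauerIndex

section SplitActions

variable {K U ι : Type*} [Field K] [AddCommGroup U] [Module K U] [Fintype ι] [DecidableEq ι]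

lemma matrixUnit_apply_apply (θ : Matrix ι ι K →ₐ[K] Module.End K U) (i j k l : ι) (u : U) :
    θ (.single i j 1) (θ (.single k l 1) u) = if j = k then θ (.single i l 1) u else 0 := by
  rw [← Module.End.mul_apply, ← map_mul]
  split_ifs with h
  · rw [h, Matrix.single_mul_single_same, one_mul]
  · rw [Matrix.single_mul_single_of_ne _ _ _ _ h, map_zero, LinearMap.zero_apply]

lemma sum_matrixUnit_apply (θ : Matrix ι ι K →ₐ[K] Module.End K U) (u : U) :
    ∑ i, θ (.single i i 1) u = u := by
  rw [← LinearMap.sum_apply, ← map_sum, Matrix.sum_single_one, map_one, Module.End.one_apply]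

/-- The corner of `W` cut out by the matrix unit at `(o, o)` of a matrix algebra acting on the
ambient space; a stable `W` is the direct sum of `Fintype.card ι` copies of it. -/
def corner (θ : Matrix ι ι K →ₐ[K] Module.End K U) (o : ι) (W : Submodule K U) :
    Submodule K U :=
  W ⊓ LinearMap.range (θ (.single o o 1))

lemma corner_apply_eq_self (θ : Matrix ι ι K →ₐ[K] Module.End K U) {o : ι} {W : Submodule K U}
    {v : U} (hv : v ∈ corner θ o W) : θ (.single o o 1) v = v := by
  obtain ⟨-, w, rfl⟩ := hv
  rw [matrixUnit_apply_apply, if_pos rfl]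

/-- The matrix units `(o, i)` and `(i, o)` identify `W` with a power of its corner. -/
def cornerEquiv (θ : Matrix ι ι K →ₐ[K] Module.End K U) (o : ι) (W : Submodule K U)
    (hW : ∀ X, ∀ w ∈ W, θ X w ∈ W) : W ≃ₗ[K] (ι → corner θ o W) where
  toFun w i := ⟨θ (.single o i 1) w, hW _ _ w.2, θ (.single o i 1) w, by
    rw [matrixUnit_apply_apply, if_pos rfl]⟩
  map_add' _ _ := by ext; simp
  map_smul' _ _ := by ext; simp
  invFun f := ⟨∑ i, θ (.single i o 1) (f i), W.sum_mem fun i _ => hW _ _ (f i).2.1⟩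
  left_inv w := Subtype.ext <| by
    simp only [matrixUnit_apply_apply, if_true, sum_matrixUnit_apply]
  right_inv f := by
    ext i
    simp [matrixUnit_apply_apply, corner_apply_eq_self θ (f i).2]

theorem exists_submodule_finrank_mul_of_matrix [Nonempty ι] [FiniteDimensional K U]
    (θ : Matrix ι ι K →ₐ[K] Module.End K U) (W : Submodule K U)
    (hW : ∀ X, ∀ w ∈ W, θ X w ∈ W) :
    ∃ V ≤ W, Module.finrank K W = Fintype.card ι * Module.finrank K V ∧
      ∀ z : Module.End K U, (∀ X, Commute (θ X) z) → (∀ w ∈ W, z w ∈ W) → ∀ v ∈ V, z v ∈ V := by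
  obtain ⟨o⟩ := ‹Nonempty ι›
  refine ⟨corner θ o W, inf_le_left, ?_, ?_⟩
  · rw [(cornerEquiv θ o W hW).finrank_eq, Module.finrank_pi_fintype, Finset.sum_const,
      Finset.card_univ, smul_eq_mul]
  · rintro z hz hzW v hv
    refine ⟨hzW v hv.1, z v, ?_⟩
    rw [← Module.End.mul_apply, hz, Module.End.mul_apply, corner_apply_eq_self θ hv]

theorem exists_submodule_finrank_mul_of_family [FiniteDimensional K U] {J : Type*}
    (s : Finset J) (c : J → Type*) [∀ j, Fintype (c j)] [∀ j, DecidableEq (c j)]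
    [∀ j, Nonempty (c j)]
    (θ : ∀ j, Matrix (c j) (c j) K →ₐ[K] Module.End K U)
    (hθ : Pairwise fun i j => ∀ X Y, Commute (θ i X) (θ j Y)) :
    ∃ V : Submodule K U,
      Module.finrank K U = (∏ j ∈ s, Fintype.card (c j)) * Module.finrank K V ∧
      ∀ z : Module.End K U, (∀ j ∈ s, ∀ X, Commute (θ j X) z) → ∀ v ∈ V, z v ∈ V := by
  classical
  induction s using Finset.induction_on with
  | empty => exact ⟨⊤, by simp, by simp⟩
  | insert a s ha ih =>
    obtain ⟨W, hrank, hW⟩ := ih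
    obtain ⟨V, -, hWV, hV⟩ := exists_submodule_finrank_mul_of_matrix (θ a) W fun X =>
      hW _ fun j hj Y => hθ (ne_of_mem_of_not_mem hj ha) Y X
    refine ⟨V, by rw [hrank, hWV, Finset.prod_insert ha]; ring, fun z hz => ?_⟩
    exact hV z (hz a (Finset.mem_insert_self a s))
      (hW z fun j hj => hz j (Finset.mem_insert_of_mem hj))

lemma finrank_dvd_finrank_of_divisionRing {B : Type*} [DivisionRing B] [Algebra K B]
    (f : B →ₐ[K] Module.End K U) (V : Submodule K U) (hV : ∀ b, ∀ v ∈ V, f b v ∈ V) :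
    Module.finrank K B ∣ Module.finrank K V := by
  let _ : Module B U := Module.compHom U f.toRingHom
  have : IsScalarTower K B U := ⟨fun a b u => by
    change f (a • b) u = a • f b u
    rw [map_smul, LinearMap.smul_apply]⟩
  let V' : Submodule B U := { V with smul_mem' := hV }
  exact Dvd.intro _ (Module.finrank_mul_finrank K B V')

end SplitActions

section Density

variable {K C C' X : Type*} [Field K] [DivisionRing C] [Algebra K C] [FiniteDimensional K C]
  [DivisionRing C'] [Algebra K C'] [AddCommGroup X] [Module K X]

lemma apply_bijective_of_divisionRing (f : C →ₐ[K] Module.End K X)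
    (hX : Module.finrank K X = Module.finrank K C) {x : X} (hx : x ≠ 0) :
    Function.Bijective fun c => f c x := by
  have : FiniteDimensional K X :=
    Module.finite_of_finrank_pos (hX ▸ Module.finrank_pos)
  let ev : C →ₗ[K] X := (LinearMap.applyₗ x).comp f.toLinearMap
  have inj : Function.Injective ev := by
    refine (injective_iff_map_eq_zero ev).2 fun c hc => by_contra fun hc0 => hx ?_
    have : f c⁻¹ (f c x) = 0 := by rw [show f c x = 0 from hc, map_zero]
    rwa [← Module.End.mul_apply, ← map_mul, inv_mul_cancel₀ hc0, map_one] at this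
  exact ⟨inj, (LinearMap.injective_iff_surjective_of_finrank_eq_finrank hX.symm).1 inj⟩

variable (f : C →ₐ[K] Module.End K X) (g : C' →ₐ[K] Module.End K X)
  (hfg : ∀ x y, Commute (f x) (g y))
  (hC' : Module.finrank K C' = Module.finrank K C) (hX : Module.finrank K X = Module.finrank K C)

include hfg hC' hX in
lemma exists_eq_smul_of_commute [Algebra.IsCentral K C] (φ : Module.End K X)
    (hf : ∀ c, Commute (f c) φ) (hg : ∀ c, Commute (g c) φ) : ∃ a : K, ∀ x, φ x = a • x := by
  have hpos : 0 < Module.finrank K C := Module.finrank_pos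
  have : FiniteDimensional K C' := Module.finite_of_finrank_pos (hC' ▸ hpos)
  have : Nontrivial X := Module.nontrivial_of_finrank_pos (hX ▸ hpos)
  obtain ⟨x₀, hx₀⟩ := exists_ne (0 : X)
  obtain ⟨c, hc⟩ := (apply_bijective_of_divisionRing f hX hx₀).2 (φ x₀)
  have hφ : φ = f c := LinearMap.ext fun x => by
    obtain ⟨y, rfl⟩ := (apply_bijective_of_divisionRing g (hX.trans hC'.symm) hx₀).2 x
    calc φ (g y x₀) = g y (φ x₀) := LinearMap.congr_fun (hg y).eq.symm x₀
      _ = g y (f c x₀) := by rw [← hc]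
      _ = f c (g y x₀) := LinearMap.congr_fun (hfg c y).eq.symm x₀
  have hcen : c ∈ Subalgebra.center K C := Subalgebra.mem_center_iff.2 fun b => by
    have := LinearMap.congr_fun (hf b).eq x₀
    rw [hφ, ← map_mul, ← map_mul] at this
    exact (apply_bijective_of_divisionRing f hX hx₀).1 this
  obtain ⟨a, rfl⟩ := Algebra.mem_bot.1 (Algebra.IsCentral.out hcen)
  exact ⟨a, fun x => by rw [hφ, AlgHom.commutes, Module.algebraMap_end_apply]⟩

include hC' hX in
theorem lift_bijective_of_commuting_actions [Algebra.IsCentral K C] :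
    Function.Bijective (Algebra.TensorProduct.lift f g hfg) := by
  classical
  have hpos : 0 < Module.finrank K C := Module.finrank_pos
  have : FiniteDimensional K C' := Module.finite_of_finrank_pos (hC' ▸ hpos)
  have : FiniteDimensional K X := Module.finite_of_finrank_pos (hX ▸ hpos)
  have : Nontrivial X := Module.nontrivial_of_finrank_pos (hX ▸ hpos)
  let _ : Module (C ⊗[K] C') X :=
    Module.compHom X (Algebra.TensorProduct.lift f g hfg).toRingHom
  have smul_eq (w : C ⊗[K] C') (x : X) : w • x = Algebra.TensorProduct.lift f g hfg w x := rfl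
  have : IsSimpleModule (C ⊗[K] C') X := by
    refine isSimpleModule_iff_toSpanSingleton_surjective.2 ⟨inferInstance, fun x hx y => ?_⟩
    obtain ⟨c, rfl⟩ := (apply_bijective_of_divisionRing f hX hx).2 y
    exact ⟨c ⊗ₜ 1, by simp [smul_eq]⟩
  have hscalar (φ : Module.End (C ⊗[K] C') X) : ∃ a : K, ∀ x, φ x = a • x := by
    have hsmul (w : C ⊗[K] C') (x : X) :
        Algebra.TensorProduct.lift f g hfg w (φ x) =
          φ (Algebra.TensorProduct.lift f g hfg w x) := (φ.map_smul w x).symm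
    refine exists_eq_smul_of_commute f g hfg hC' hX
      { toFun := φ, map_add' := φ.map_add, map_smul' := fun a x => ?_ }
      (fun c => LinearMap.ext fun x => ?_) (fun c => LinearMap.ext fun x => ?_)
    · simpa using (hsmul (algebraMap K _ a) x).symm
    · simpa using hsmul (c ⊗ₜ 1) x
    · simpa using hsmul (1 ⊗ₜ c) x
  have surj : Function.Surjective (Algebra.TensorProduct.lift f g hfg) := fun T => by
    let T' : Module.End (Module.End (C ⊗[K] C') X) X :=
      { T with
        map_smul' := fun φ x => by
          obtain ⟨a, ha⟩ := hscalar φ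
          simp [ha] }
    let b := Module.finBasis K X
    obtain ⟨w, hw⟩ := jacobson_density T' (Finset.univ.image b)
    exact ⟨w, b.ext fun i => (hw (b i) (by simp)).symm⟩
  refine ⟨(LinearMap.injective_iff_surjective_of_finrank_eq_finrank
    (f := (Algebra.TensorProduct.lift f g hfg).toLinearMap) ?_).2 surj, surj⟩
  rw [Module.finrank_tensorProduct, Module.finrank_linearMap, hC', hX]

end Density

section GaloisDescent

variable {K M V Γ : Type*} [Field K] [Field M] [Algebra K M] [AddCommGroup V] [Module K V]
  [Group Γ] {σ : Γ →* (M ≃ₐ[K] M)} (hσ : Function.Surjective σ) {ρ : Representation K Γ V}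
  (hker : ∀ γ ∈ σ.ker, ρ γ = 1)

include hσ hker in
lemma sum_surjInv_mem_invariants [FiniteDimensional K M] (v : V) :
    ∑ g, ρ (Function.surjInv hσ g) v ∈ ρ.invariants := by
  have congr_of_eq {a b : Γ} (h : σ a = σ b) : ρ a = ρ b := by
    have := hker (b⁻¹ * a) (by rw [MonoidHom.mem_ker, map_mul, map_inv, h, inv_mul_cancel])
    rw [← mul_inv_cancel_left b a, map_mul, this, mul_one]
  intro γ
  simp only [map_sum, ← Module.End.mul_apply, ← map_mul]
  refine Fintype.sum_equiv (Equiv.mulLeft (σ γ)) _ _ fun g => ?_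
  refine LinearMap.congr_fun (congr_of_eq ?_) v
  simp only [map_mul, Function.surjInv_eq, Equiv.coe_mulLeft]

variable [Module M V] (hρ : ∀ γ (c : M) v, ρ γ (c • v) = σ γ c • ρ γ v)

include hσ hρ hker in
lemma span_invariants_eq_top [FiniteDimensional K M] :
    Submodule.span M (ρ.invariants : Set V) = ⊤ := by
  by_contra hne
  obtain ⟨ℓ, hℓ, hker'⟩ := Submodule.exists_le_ker_of_lt_top _ (lt_top_iff_ne_top.2 hne)
  refine hℓ (LinearMap.ext fun v => ?_)
  set s := Function.surjInv hσ
  have hsum (c : M) : ∑ g : M ≃ₐ[K] M, ℓ (ρ (s g) v) * g c = 0 := by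
    have := hker' (Submodule.subset_span (sum_surjInv_mem_invariants hσ hker (c • v)))
    simpa only [LinearMap.mem_ker, map_sum, hρ, map_smul, Function.surjInv_eq, smul_eq_mul, s,
      mul_comm] using this
  have indep := (linearIndependent_monoidHom M M).comp
    (fun g : M ≃ₐ[K] M => (g : M →* M))
    fun g h hgh => AlgEquiv.ext fun c => DFunLike.congr_fun hgh c
  have hone := Fintype.linearIndependent_iff.1 indep (fun g => ℓ (ρ (s g) v))
    (funext fun c => by simpa using hsum c) 1
  rwa [hker (s 1) (Function.surjInv_eq hσ 1)] at hone

variable [IsScalarTower K M V]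

include hσ hρ in
lemma span_range_basis_eq_invariants [FiniteDimensional K M] [IsGalois K M] {ι : Type*}
    (b : Module.Basis ι M V) (hb : ∀ i, b i ∈ ρ.invariants) :
    Submodule.span K (Set.range b) = ρ.invariants := by
  refine le_antisymm (Submodule.span_le.2 (Set.range_subset_iff.2 hb)) fun v hv => ?_
  refine (b.mem_span_iff_repr_mem K v).2 fun i => ?_
  refine (IsGalois.mem_range_algebraMap_iff_fixed _).2 fun g => ?_
  obtain ⟨γ, rfl⟩ := hσ g
  let c := (b.repr v).mapRange (σ γ) (map_zero _)
  have hc : b.repr.symm c = v := calc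
    b.repr.symm c = ρ γ (b.repr.symm (b.repr v)) := by
      rw [b.repr_symm_apply, b.repr_symm_apply, Finsupp.linearCombination_apply,
        Finsupp.linearCombination_apply, map_finsuppSum, Finsupp.sum_mapRange_index (by simp)]
      exact Finsupp.sum_congr fun j _ => by rw [hρ, hb j γ]
    _ = v := by rw [LinearEquiv.symm_apply_apply, hv γ]
  exact DFunLike.congr_fun (b.repr.symm_apply_eq.1 hc) i

include hσ hρ hker in
theorem finrank_invariants [FiniteDimensional K M] [IsGalois K M] [FiniteDimensional M V] :
    Module.finrank K ρ.invariants = Module.finrank M V := by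
  let b := Module.Basis.ofSpan (span_invariants_eq_top hσ hker hρ).ge
  have := Module.Finite.finite_basis b
  have := Fintype.ofFinite ((linearIndepOn_empty M id).extend
    (Set.empty_subset (ρ.invariants : Set V)))
  have hb (i) : b i ∈ ρ.invariants := Module.Basis.ofSpan_subset _ (Set.mem_range_self i)
  rw [← span_range_basis_eq_invariants hσ hρ b hb, Module.finrank_eq_card_basis b]
  exact finrank_span_eq_card (b.linearIndependent.restrict_scalars' K)

end GaloisDescent

section Commutant

variable {K M W Γ : Type*} [Field K] [Field M] [Algebra K M] [AddCommGroup W] [Module K W]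
  [Module M W] [IsScalarTower K M W] [Group Γ] {σ : Γ →* (M ≃ₐ[K] M)} (ρ : Representation K Γ W)

variable (M) in
/-- The `M`-linear operators that commute with a representation on an `M`-vector space. When the
representation is semilinear, this is the descent to `K` of the algebra of all operators. -/
def commutant : Subalgebra K (Module.End M W) where
  carrier := {T | ∀ γ f, T (ρ γ f) = ρ γ (T f)}
  mul_mem' := fun {S T} hS hT γ f => by
    rw [Module.End.mul_apply, Module.End.mul_apply, hT, hS]
  add_mem' := fun {S T} hS hT γ f => by
    rw [LinearMap.add_apply, LinearMap.add_apply, hS, hT, map_add]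
  algebraMap_mem' := fun a γ f => by
    rw [Module.algebraMap_end_apply, Module.algebraMap_end_apply, map_smul]

variable (M) in
/-- The commutant of a representation acts on its invariants. -/
noncomputable def commutantRestrict : commutant M ρ →ₐ[K] Module.End K ρ.invariants :=
  AlgHom.ofLinearMap
    { toFun T := (T.1.restrictScalars K).restrict fun v hv γ => by
        rw [LinearMap.restrictScalars_apply, ← T.2 γ v, hv γ]
      map_add' _ _ := rfl
      map_smul' _ _ := rfl } rfl fun _ _ => rfl

variable {ρ} (hρ : ∀ γ (c : M) f, ρ γ (c • f) = σ γ c • ρ γ f)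

/-- The conjugation action of a semilinear representation on linear operators. -/
def conjAction : Representation K Γ (W →ₗ[M] W) where
  toFun γ :=
    { toFun T :=
        { toFun f := ρ γ (T (ρ γ⁻¹ f))
          map_add' _ _ := by simp only [map_add]
          map_smul' c f := by
            rw [hρ, map_smul, hρ, ← AlgEquiv.mul_apply, ← map_mul,
              mul_inv_cancel, map_one, AlgEquiv.one_apply, RingHom.id_apply] }
      map_add' _ _ := LinearMap.ext fun _ => (ρ γ).map_add _ _
      map_smul' _ _ := LinearMap.ext fun _ => (ρ γ).map_smul _ _ }
  map_one' := by ext; simp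
  map_mul' γ δ := by ext; simp [mul_inv_rev]

lemma conjAction_apply_apply (γ : Γ) (T : W →ₗ[M] W) (f : W) :
    conjAction hρ γ T f = ρ γ (T (ρ γ⁻¹ f)) := rfl

lemma conjAction_smul (γ : Γ) (c : M) (T : W →ₗ[M] W) :
    conjAction hρ γ (c • T) = σ γ c • conjAction hρ γ T :=
  LinearMap.ext fun _ => hρ _ _ _

lemma conjAction_eq_one {γ : Γ} {a : K} (ha : ρ γ = a • 1) : conjAction hρ γ = 1 :=
  LinearMap.ext fun T => LinearMap.ext fun f => calc conjAction hρ γ T f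
    _ = T (ρ γ (ρ γ⁻¹ f)) := by
      simp only [conjAction_apply_apply, ha, LinearMap.smul_apply, Module.End.one_apply,
        LinearMap.map_smul_of_tower]
    _ = T f := by rw [Representation.self_inv_apply]

lemma toSubmodule_commutant :
    Subalgebra.toSubmodule (commutant M ρ) = (conjAction hρ).invariants := by
  refine Submodule.ext fun T => forall_congr' fun γ =>
    (⟨fun h => LinearMap.ext fun f => ?_, fun h f => ?_⟩ : _ ↔ conjAction hρ γ T = T)
  · rw [conjAction_apply_apply, ← h, Representation.self_inv_apply]
  · rw [← LinearMap.congr_fun h, conjAction_apply_apply, Representation.inv_self_apply]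

variable (hσ : Function.Surjective σ) (hker : ∀ γ ∈ σ.ker, ∃ a : K, ρ γ = a • 1)

include hρ hσ hker

lemma span_commutant [FiniteDimensional K M] :
    Submodule.span M (commutant M ρ : Set (W →ₗ[M] W)) = ⊤ := by
  have htriv (γ) (hγ : γ ∈ σ.ker) : conjAction hρ γ = 1 :=
    conjAction_eq_one hρ (hker γ hγ).choose_spec
  rw [← Subalgebra.coe_toSubmodule, toSubmodule_commutant hρ]
  exact span_invariants_eq_top hσ htriv (conjAction_smul hρ)

theorem finrank_commutant [FiniteDimensional K M] [IsGalois K M] [FiniteDimensional M W] :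
    Module.finrank K (commutant M ρ) = Module.finrank M W ^ 2 := by
  have htriv (γ) (hγ : γ ∈ σ.ker) : conjAction hρ γ = 1 :=
    conjAction_eq_one hρ (hker γ hγ).choose_spec
  rw [← Subalgebra.finrank_toSubmodule, toSubmodule_commutant hρ,
    finrank_invariants hσ htriv (conjAction_smul hρ), Module.finrank_linearMap, sq]

theorem isCentral_commutant [FiniteDimensional K M] [IsGalois K M] [Nontrivial W] :
    Algebra.IsCentral K (commutant M ρ) where
  out z hz := by
    have hcomm (T : Module.End M W) : Commute T z := by
      induction (span_commutant hρ hσ hker).ge (Submodule.mem_top : T ∈ ⊤) using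
        Submodule.span_induction with
      | mem T hT => exact congr_arg Subtype.val (Subalgebra.mem_center_iff.1 hz ⟨T, hT⟩)
      | zero => exact Commute.zero_left _
      | add S T _ _ hS hT => exact hS.add_left hT
      | smul c T _ hT => exact hT.smul_left c
    obtain ⟨c, hc⟩ := Algebra.mem_bot.1
      (Algebra.IsCentral.out (K := M) (Subalgebra.mem_center_iff.2 hcomm))
    have hzc (f : W) : (z : Module.End M W) f = c • f := by
      rw [← hc, Module.algebraMap_end_apply]
    have hfixed (γ : Γ) : σ γ c = c := by
      obtain ⟨f, hf⟩ := exists_ne (0 : W)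
      have hne : ρ γ f ≠ 0 := fun h0 => hf <| by
        rw [← Representation.inv_self_apply ρ γ f, h0, map_zero]
      have := z.2 γ f
      rw [hzc, hzc, hρ] at this
      exact (smul_left_injective M hne this).symm
    obtain ⟨a, rfl⟩ := (IsGalois.mem_range_algebraMap_iff_fixed c).2 fun g => by
      obtain ⟨γ, rfl⟩ := hσ g
      exact hfixed γ
    exact Algebra.mem_bot.2 ⟨a, Subtype.ext <| LinearMap.ext fun f => by
      rw [hzc, algebraMap_smul]; rfl⟩

end Commutant

/-- A character, with values in the units of `K`, of a subgroup of `Γ`. -/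
structure PartialCharacter (K Γ : Type*) [Field K] [CommGroup Γ] where
  domain : Subgroup Γ
  char : domain →* Kˣ

section QuasiPeriodic

variable {K Γ : Type*} [Field K] [CommGroup Γ] (τ : PartialCharacter K Γ) (M : Type*) [Field M]
  [Algebra K M]

/-- The functions `Γ → M` that are multiplied by a character under translation by its domain. -/
def quasiPeriodic : Submodule M (Γ → M) where
  carrier := {f | ∀ (l : τ.domain) x, f (l * x) = (τ.char l : K) • f x}
  zero_mem' := fun _ _ => by simp
  add_mem' := fun hf hg l x => by simp [hf l x, hg l x]
  smul_mem' := fun c f hf l x => by simp [hf l x]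

variable {τ M} in
lemma apply_domain_mul (f : quasiPeriodic τ M) (l : τ.domain) (x : Γ) :
    f.1 (l * x) = (τ.char l : K) • f.1 x := f.2 l x

/-- The element of the domain that moves the chosen representative of the coset of `x` to `x`. -/
noncomputable def cosetShift (x : Γ) : τ.domain :=
  ⟨x * (x : Γ ⧸ τ.domain).out⁻¹, by
    rw [mul_comm]; exact QuotientGroup.eq.1 (QuotientGroup.out_eq' _)⟩

lemma cosetShift_mul_out (x : Γ) : (cosetShift τ x : Γ) * (x : Γ ⧸ τ.domain).out = x :=
  inv_mul_cancel_right _ _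

lemma mk_domain_mul (l : τ.domain) (x : Γ) : ((l * x : Γ) : Γ ⧸ τ.domain) = x :=
  QuotientGroup.eq.2 (by simp)

lemma cosetShift_domain_mul (l : τ.domain) (x : Γ) :
    cosetShift τ (l * x) = l * cosetShift τ x :=
  Subtype.ext <| by
    change l * x * ((l * x : Γ) : Γ ⧸ τ.domain).out⁻¹ = l * (x * (x : Γ ⧸ τ.domain).out⁻¹)
    rw [mk_domain_mul, mul_assoc]

/-- A quasi-periodic function is determined by its values at coset representatives. -/
noncomputable def quasiPeriodicEquiv : quasiPeriodic τ M ≃ₗ[M] (Γ ⧸ τ.domain → M) where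
  toFun f q := f.1 q.out
  map_add' _ _ := rfl
  map_smul' _ _ := rfl
  invFun c := ⟨fun x => (τ.char (cosetShift τ x) : K) • c x, fun l x => by
    simp only [cosetShift_domain_mul, mk_domain_mul, map_mul, Units.val_mul, mul_smul]⟩
  left_inv f := Subtype.ext <| funext fun x => by
    change (τ.char (cosetShift τ x) : K) • f.1 (x : Γ ⧸ τ.domain).out = f.1 x
    rw [← apply_domain_mul, cosetShift_mul_out]
  right_inv c := funext fun q => by
    have hs : cosetShift τ q.out = 1 := Subtype.ext <| by simp [cosetShift]
    simp [hs]

variable {M}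

instance [τ.domain.FiniteIndex] : FiniteDimensional M (quasiPeriodic τ M) :=
  Module.Finite.equiv (quasiPeriodicEquiv τ M).symm

lemma finrank_quasiPeriodic [τ.domain.FiniteIndex] :
    Module.finrank M (quasiPeriodic τ M) = τ.domain.index := by
  have := Fintype.ofFinite (Γ ⧸ τ.domain)
  rw [(quasiPeriodicEquiv τ M).finrank_eq, Module.finrank_fintype_fun_eq_card,
    Subgroup.index_eq_card, Nat.card_eq_fintype_card]

/-- `Γ` acts on the quasi-periodic functions on a group `X` over `Γ` by translating the argument
and applying field automorphisms to the values. -/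
def twist {X : Type*} [CommGroup X] (τ : PartialCharacter K X) (σ : Γ →* (M ≃ₐ[K] M))
    (ι : Γ →* X) : Representation K Γ (quasiPeriodic τ M) where
  toFun γ :=
    { toFun f := ⟨fun x => σ γ (f.1 ((ι γ)⁻¹ * x)), fun l x => by
        simp only [mul_left_comm _ (l : X), apply_domain_mul, map_smul]⟩
      map_add' _ _ := by ext; simp
      map_smul' _ _ := by ext; simp }
  map_one' := by ext; simp
  map_mul' _ _ := by ext; simp [mul_assoc, mul_comm]

section Twist

variable {X : Type*} [CommGroup X] {τ : PartialCharacter K X} {σ : Γ →* (M ≃ₐ[K] M)}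
  {ι : Γ →* X}

lemma twist_apply_apply (γ : Γ) (f : quasiPeriodic τ M) (x : X) :
    (twist τ σ ι γ f).1 x = σ γ (f.1 ((ι γ)⁻¹ * x)) := rfl

lemma twist_smul (γ : Γ) (c : M) (f : quasiPeriodic τ M) :
    twist τ σ ι γ (c • f) = σ γ c • twist τ σ ι γ f :=
  Subtype.ext <| funext fun _ => map_mul _ _ _

lemma twist_of_mem_ker {γ : Γ} (hγ : γ ∈ σ.ker) (hι : ι γ ∈ τ.domain) :
    twist τ σ ι γ = (τ.char ⟨ι γ, hι⟩⁻¹ : K) • (1 : Module.End K (quasiPeriodic τ M)) := by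
  ext f x
  rw [twist_apply_apply, hγ]
  exact f.2 ⟨ι γ, hι⟩⁻¹ x

end Twist

end QuasiPeriodic

section CrossedProduct

variable {K M Γ : Type*} [Field K] [CommGroup Γ] [Field M] [Algebra K M]

section Kernel

variable {τ : PartialCharacter K Γ}

variable (M) in
open Classical in
/-- The quasi-periodic function supported on a coset, with value `1` at its representative. -/
noncomputable def cosetDelta (q : Γ ⧸ τ.domain) : quasiPeriodic τ M :=
  (quasiPeriodicEquiv τ M).symm (Pi.single q 1)

lemma sum_smul_cosetDelta [Fintype (Γ ⧸ τ.domain)] (f : quasiPeriodic τ M) :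
    ∑ q : Γ ⧸ τ.domain, f.1 q.out • cosetDelta M q = f := by
  classical
  refine (quasiPeriodicEquiv τ M).injective ?_
  simp only [map_sum, map_smul, cosetDelta, LinearEquiv.apply_symm_apply]
  exact (pi_eq_sum_univ' _).symm

lemma apply_eq_sum_cosetDelta [Fintype (Γ ⧸ τ.domain)] (T : Module.End M (quasiPeriodic τ M))
    (f : quasiPeriodic τ M) (x : Γ) :
    (T f).1 x = ∑ q : Γ ⧸ τ.domain, f.1 q.out * (T (cosetDelta M q)).1 x := by
  conv_lhs => rw [← sum_smul_cosetDelta f, map_sum]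
  simp

end Kernel

variable (τ : PartialCharacter K Γ) (σ : Γ →* (M ≃ₐ[K] M))

/-- The crossed product attached to a partial character, realised as the commutant of the twisted
translations in the linear operators on quasi-periodic functions. -/
def crossedProduct : Subalgebra K (Module.End M (quasiPeriodic τ M)) :=
  commutant M (twist τ σ (.id Γ))

instance : Ring (crossedProduct τ σ) :=
  Subalgebra.toRing (A := Module.End M (quasiPeriodic τ M)) _

variable {τ σ} [τ.domain.FiniteIndex]

instance : Nontrivial (quasiPeriodic τ M) :=
  Module.nontrivial_of_finrank_pos (R := M) <| by
    rw [finrank_quasiPeriodic]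
    exact Nat.pos_of_ne_zero Subgroup.FiniteIndex.index_ne_zero

section Descent

variable [FiniteDimensional K M] [IsGalois K M] (hσ : Function.Surjective σ)
  (hker : σ.ker ≤ τ.domain)

include hσ hker

theorem finrank_crossedProduct : Module.finrank K (crossedProduct τ σ) = τ.domain.index ^ 2 := by
  rw [← finrank_quasiPeriodic (M := M) τ]
  exact finrank_commutant twist_smul hσ fun _ hγ => ⟨_, twist_of_mem_ker hγ (hker hγ)⟩

theorem isCentral_crossedProduct : Algebra.IsCentral K (crossedProduct τ σ) :=
  isCentral_commutant twist_smul hσ fun _ hγ => ⟨_, twist_of_mem_ker hγ (hker hγ)⟩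

end Descent

omit [τ.domain.FiniteIndex] in
lemma crossedProduct_apply_apply [Fintype (Γ ⧸ τ.domain)] (T : crossedProduct τ σ)
    (f : quasiPeriodic τ M) (x : Γ) :
    (T.1 f).1 x = ∑ q : Γ ⧸ τ.domain, f.1 (x * q.out) * σ x ((T.1 (cosetDelta M q)).1 1) := calc
  (T.1 f).1 x = σ x ((twist τ σ (.id Γ) x⁻¹ (T.1 f)).1 1) := by
    rw [twist_apply_apply, ← AlgEquiv.mul_apply, ← map_mul]; simp
  _ = _ := by
    rw [← T.2, apply_eq_sum_cosetDelta, map_sum]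
    refine Finset.sum_congr rfl fun q _ => ?_
    rw [map_mul, twist_apply_apply, ← AlgEquiv.mul_apply, ← map_mul]; simp

section Valuation

variable {Γ₀ : Type*} [LinearOrderedCommGroupWithZero Γ₀]

/-- The values of a partial character under the valuation `v` extend to a character `w` of the
whole group, whose values outside the domain are not values of `v`. -/
structure PartialCharacter.IsRamified (τ : PartialCharacter K Γ) (v : Valuation M Γ₀)
    (w : Γ →* Γ₀) : Prop where
  valuation_char : ∀ l : τ.domain, v (algebraMap K M (τ.char l)) = w l
  mem_domain : ∀ a ≠ 0, ∀ γ, v a = w γ → γ ∈ τ.domain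

variable {v : Valuation M Γ₀} {w : Γ →* Γ₀}

omit [τ.domain.FiniteIndex] in
lemma PartialCharacter.IsRamified.mk_eq (h : τ.IsRamified v w) {f : quasiPeriodic τ M} {x y : Γ}
    (hx : f.1 x ≠ 0) (hxy : v (f.1 x) / w x = v (f.1 y) / w y) :
    (x : Γ ⧸ τ.domain) = y := by
  have hw (z : Γ) : w z ≠ 0 := ((Group.isUnit z).map w).ne_zero
  have hy : f.1 y ≠ 0 := fun hy => hx <| (v.zero_iff).1 <| by
    simpa [hy, hw] using hxy
  have hval : v (f.1 x / f.1 y) = w (x * y⁻¹) := by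
    have hmul : w x = w (x * y⁻¹) * w y := by rw [← map_mul, inv_mul_cancel_right]
    rw [map_div₀, div_eq_iff (v.ne_zero_iff.2 hy)]
    refine mul_right_cancel₀ (hw y) ?_
    rw [(div_eq_div_iff (hw x) (hw y)).1 hxy, hmul]
    ac_rfl
  exact (QuotientGroup.eq.2 (by
    rw [mul_comm]; exact h.mem_domain _ (div_ne_zero hx hy) _ hval)).symm

omit [τ.domain.FiniteIndex] in
lemma PartialCharacter.IsRamified.div_domain_mul (h : τ.IsRamified v w) (f : quasiPeriodic τ M)
    (l : τ.domain) (x : Γ) : v (f.1 (l * x)) / w (l * x) = v (f.1 x) / w x := by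
  rw [apply_domain_mul, Algebra.smul_def, map_mul, map_mul, h.valuation_char,
    mul_div_mul_left _ _ ((Group.isUnit _).map w).ne_zero]

lemma PartialCharacter.IsRamified.exists_max (h : τ.IsRamified v w) {f : quasiPeriodic τ M}
    (hf : f ≠ 0) : ∃ x, f.1 x ≠ 0 ∧ ∀ y, v (f.1 y) / w y ≤ v (f.1 x) / w x := by
  obtain ⟨q, hq⟩ := Finite.exists_max fun q : Γ ⧸ τ.domain => v (f.1 q.out) / w q.out
  have hmax (y : Γ) : v (f.1 y) / w y ≤ v (f.1 q.out) / w q.out := by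
    rw [← cosetShift_mul_out τ y, h.div_domain_mul]
    exact hq y
  refine ⟨q.out, fun h0 => hf (Subtype.ext (funext fun y => v.zero_iff.1 ?_)), hmax⟩
  have := hmax y
  rwa [h0, map_zero, zero_div, le_zero_iff, div_eq_zero_iff,
    or_iff_left ((Group.isUnit y).map w).ne_zero] at this

lemma exists_coefficient_max (w : Γ →* Γ₀) {T : crossedProduct τ σ} (hT : T ≠ 0) :
    ∃ q : Γ ⧸ τ.domain, (T.1 (cosetDelta M q)).1 1 ≠ 0 ∧ ∀ p : Γ ⧸ τ.domain,
      v ((T.1 (cosetDelta M p)).1 1) * w p.out ≤ v ((T.1 (cosetDelta M q)).1 1) * w q.out := by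
  have := Fintype.ofFinite (Γ ⧸ τ.domain)
  obtain ⟨q, hq⟩ := Finite.exists_max fun q : Γ ⧸ τ.domain =>
    v ((T.1 (cosetDelta M q)).1 1) * w q.out
  refine ⟨q, fun h0 => hT <| Subtype.ext <| LinearMap.ext fun f => Subtype.ext <|
    funext fun x => ?_, hq⟩
  rw [crossedProduct_apply_apply]
  refine Finset.sum_eq_zero fun p _ => ?_
  have hp : (T.1 (cosetDelta M p)).1 1 = 0 := by
    simpa [h0, ((Group.isUnit p.out).map w).ne_zero] using hq p
  rw [hp, map_zero, mul_zero]

theorem PartialCharacter.IsRamified.injective (h : τ.IsRamified v w)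
    (hv : ∀ γ a, v (σ γ a) = v a) {T : crossedProduct τ σ} (hT : T ≠ 0) :
    Function.Injective T.1 := by
  classical
  have := Fintype.ofFinite (Γ ⧸ τ.domain)
  have hw (z : Γ) : w z ≠ 0 := ((Group.isUnit z).map w).ne_zero
  set a := fun q : Γ ⧸ τ.domain => (T.1 (cosetDelta M q)).1 1
  obtain ⟨q, ha : a q ≠ 0, hq⟩ := exists_coefficient_max (v := v) w hT
  refine (injective_iff_map_eq_zero _).2 fun f => not_imp_not.1 fun hf h0 => ?_
  obtain ⟨x, hx, hmax⟩ := h.exists_max hf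
  let y := x * q.out⁻¹
  have hxy : y * q.out = x := inv_mul_cancel_right _ _
  have hval (p) : v (f.1 (y * p.out) * σ y (a p)) =
      v (f.1 (y * p.out)) / w (y * p.out) * (v (a p) * w p.out) * w y := by
    rw [map_mul, hv, map_mul w]
    field_simp [hw]
  have hlt (p) (hp : p ≠ q) : v (f.1 (y * p.out) * σ y (a p)) <
      v (f.1 (y * q.out) * σ y (a q)) := by
    have : v (f.1 (y * p.out)) / w (y * p.out) < v (f.1 x) / w x :=
      (hmax _).lt_of_ne fun heq => hp <| by
        have hmk : ((y * q.out : Γ) : Γ ⧸ τ.domain) = (y * p.out : Γ) := by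
          rw [hxy]; exact h.mk_eq hx heq.symm
        simpa using hmk.symm
    rw [hval, hval, hxy]
    have hpos : 0 < v (a q) * w q.out :=
      zero_lt_iff.2 (mul_ne_zero (v.ne_zero_iff.2 ha) (hw _))
    exact mul_lt_mul_of_pos_right
      (mul_lt_mul_of_lt_of_le_of_nonneg_of_pos this (hq p) zero_le hpos) (zero_lt_iff.2 (hw y))
  have hdom : v ((T.1 f).1 y) = v (f.1 (y * q.out) * σ y (a q)) := by
    rw [crossedProduct_apply_apply]
    exact v.map_sum_eq_of_lt (Finset.mem_univ q) fun p hp => hlt p (by simpa using hp)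
  rw [h0, hxy] at hdom
  have : f.1 x * σ y (a q) = 0 := v.zero_iff.1 (hdom.symm.trans (map_zero v))
  simp [hx, ha] at this

theorem PartialCharacter.IsRamified.isDomain (h : τ.IsRamified v w)
    (hv : ∀ γ a, v (σ γ a) = v a) : IsDomain (crossedProduct τ σ) := by
  have : NoZeroDivisors (crossedProduct τ σ) := ⟨fun {S T} hST => by
    refine or_iff_not_imp_left.2 fun hS => Subtype.ext <| LinearMap.ext fun f => ?_
    refine h.injective hv hS ?_
    exact (LinearMap.congr_fun (congr_arg Subtype.val hST) f).trans (map_zero S.1).symm⟩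
  exact NoZeroDivisors.to_isDomain (crossedProduct τ σ)

end Valuation
end CrossedProduct

section Slots

variable {K M Γ I : Type*} [Field K] [CommGroup Γ] [Field M] [Algebra K M] [Fintype I]
  (τ : I → PartialCharacter K Γ)

/-- The product of partial characters, a partial character of the power `I → Γ`. -/
def PartialCharacter.pi : PartialCharacter K (I → Γ) where
  domain := Subgroup.pi Set.univ fun i => (τ i).domain
  char :=
    { toFun l := ∏ i, (τ i).char ⟨l.1 i, l.2 i trivial⟩
      map_one' := Finset.prod_eq_one fun i _ => map_one (τ i).char
      map_mul' l m := by
        rw [← Finset.prod_mul_distrib]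
        exact Finset.prod_congr rfl fun i _ => map_mul (τ i).char ⟨l.1 i, _⟩ ⟨m.1 i, _⟩ }

lemma PartialCharacter.char_pi_apply (l : (PartialCharacter.pi τ).domain) :
    (PartialCharacter.pi τ).char l = ∏ i, (τ i).char ⟨l.1 i, l.2 i trivial⟩ := rfl

lemma PartialCharacter.index_pi_domain :
    (PartialCharacter.pi τ).domain.index = ∏ i, (τ i).domain.index :=
  Subgroup.index_pi _

instance [∀ i, (τ i).domain.FiniteIndex] : (PartialCharacter.pi τ).domain.FiniteIndex where
  index_ne_zero := by
    rw [PartialCharacter.index_pi_domain]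
    exact Finset.prod_ne_zero_iff.2 fun i _ => Subgroup.FiniteIndex.index_ne_zero

variable [DecidableEq I] {τ}

lemma mulSingle_mem_pi_domain (i : I) (l : (τ i).domain) :
    Pi.mulSingle i (l : Γ) ∈ (PartialCharacter.pi τ).domain := fun j _ => by
  obtain rfl | hj := eq_or_ne j i
  · rw [Pi.mulSingle_eq_same]; exact l.2
  · rw [Pi.mulSingle_eq_of_ne hj]; exact (τ j).domain.one_mem

lemma char_pi_mulSingle (i : I) (l : (τ i).domain) :
    (PartialCharacter.pi τ).char ⟨_, mulSingle_mem_pi_domain i l⟩ = (τ i).char l := by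
  rw [PartialCharacter.char_pi_apply, Finset.prod_eq_single i]
  · simp
  · intro j _ hj
    simp only [Pi.mulSingle_eq_of_ne hj]
    exact map_one _
  · exact fun h => absurd (Finset.mem_univ i) h

/-- The restriction of a quasi-periodic function of several variables to one of them. -/
def slice (i : I) (f : quasiPeriodic (PartialCharacter.pi τ) M) (x : I → Γ) :
    quasiPeriodic (τ i) M where
  val y := f.1 (Function.update x i y)
  property l y := by
    rw [← char_pi_mulSingle i l, ← apply_domain_mul]
    refine congr_arg f.1 (funext fun j => ?_)
    obtain rfl | hj := eq_or_ne j i <;> simp [*]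

lemma slice_apply (i : I) (f : quasiPeriodic (PartialCharacter.pi τ) M) (x : I → Γ) (y : Γ) :
    (slice i f x).1 y = f.1 (Function.update x i y) := rfl

lemma char_smul_slice_domain_mul (i : I) (f : quasiPeriodic (PartialCharacter.pi τ) M)
    (l : (PartialCharacter.pi τ).domain) (x : I → Γ) :
    ((τ i).char ⟨l.1 i, l.2 i trivial⟩ : K) • slice i f (l * x) =
      ((PartialCharacter.pi τ).char l : K) • slice i f x := by
  refine Subtype.ext (funext fun y => ?_)
  change ((τ i).char _ : K) • (slice i f _).1 y = ((PartialCharacter.pi τ).char l : K) • f.1 _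
  rw [← apply_domain_mul, ← apply_domain_mul]
  refine congr_arg f.1 (funext fun j => ?_)
  obtain rfl | hj := eq_or_ne j i <;> simp [*]

/-- An operator on functions of one variable, acting on functions of several variables through
the variable of index `i`. -/
def slotEnd (i : I) (T : Module.End M (quasiPeriodic (τ i) M)) :
    Module.End M (quasiPeriodic (PartialCharacter.pi τ) M) where
  toFun f := ⟨fun x => (T (slice i f x)).1 (x i), fun l x => by
    have hT := congr_arg T (char_smul_slice_domain_mul i f l x)
    rw [LinearMap.map_smul_of_tower, LinearMap.map_smul_of_tower] at hT
    exact (apply_domain_mul _ ⟨l.1 i, l.2 i trivial⟩ _).trans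
      (congr_fun (congr_arg Subtype.val hT) (x i))⟩
  map_add' f g := Subtype.ext <| funext fun x =>
    congr_fun (congr_arg Subtype.val (T.map_add (slice i f x) (slice i g x))) (x i)
  map_smul' c f := Subtype.ext <| funext fun x =>
    congr_fun (congr_arg Subtype.val (T.map_smul c (slice i f x))) (x i)

lemma slotEnd_apply_apply (i : I) (T : Module.End M (quasiPeriodic (τ i) M))
    (f : quasiPeriodic (PartialCharacter.pi τ) M) (x : I → Γ) :
    (slotEnd i T f).1 x = (T (slice i f x)).1 (x i) := rfl

lemma slice_slotEnd (i : I) (T : Module.End M (quasiPeriodic (τ i) M))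
    (f : quasiPeriodic (PartialCharacter.pi τ) M) (x : I → Γ) :
    slice i (slotEnd i T f) x = T (slice i f x) := by
  refine Subtype.ext (funext fun y => ?_)
  have hslice : slice i f (Function.update x i y) = slice i f x :=
    Subtype.ext (funext fun z => by rw [slice_apply, slice_apply, Function.update_idem])
  rw [slice_apply, slotEnd_apply_apply, Function.update_self, hslice]

/-- The action of operators through the variable of index `i`, as an algebra homomorphism. -/
def slot (i : I) : Module.End M (quasiPeriodic (τ i) M) →ₐ[M]
    Module.End M (quasiPeriodic (PartialCharacter.pi τ) M) :=
  AlgHom.ofLinearMap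
    { toFun T := slotEnd i T
      map_add' _ _ := rfl
      map_smul' _ _ := rfl }
    (LinearMap.ext fun f => Subtype.ext <| funext fun x =>
      congr_arg f.1 (Function.update_eq_self i x))
    fun S T => LinearMap.ext fun f => Subtype.ext <| funext fun x =>
      congr_arg (fun g => (S g).1 (x i)) (slice_slotEnd i T f x).symm

lemma slot_apply_apply (i : I) (T : Module.End M (quasiPeriodic (τ i) M))
    (f : quasiPeriodic (PartialCharacter.pi τ) M) (x : I → Γ) :
    (slot i T f).1 x = (T (slice i f x)).1 (x i) := rfl

lemma slot_apply_eq_sum (i : I) [Fintype (Γ ⧸ (τ i).domain)]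
    (T : Module.End M (quasiPeriodic (τ i) M)) (f : quasiPeriodic (PartialCharacter.pi τ) M)
    (x : I → Γ) : (slot i T f).1 x = ∑ q : Γ ⧸ (τ i).domain,
      f.1 (Function.update x i q.out) * (T (cosetDelta M q)).1 (x i) := by
  rw [slot_apply_apply, apply_eq_sum_cosetDelta]
  rfl

lemma commute_slot [∀ i, (τ i).domain.FiniteIndex] {i j : I} (hij : i ≠ j)
    (S : Module.End M (quasiPeriodic (τ i) M))
    (T : Module.End M (quasiPeriodic (τ j) M)) : Commute (slot i S) (slot j T) := by
  have (k : I) := Fintype.ofFinite (Γ ⧸ (τ k).domain)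
  refine LinearMap.ext fun f => Subtype.ext <| funext fun x => ?_
  simp only [Module.End.mul_apply, slot_apply_eq_sum, Finset.sum_mul,
    Function.update_of_ne hij, Function.update_of_ne hij.symm]
  rw [Finset.sum_comm]
  refine Finset.sum_congr rfl fun p _ => Finset.sum_congr rfl fun q _ => ?_
  rw [Function.update_comm hij, mul_right_comm]

variable {σ : Γ →* (M ≃ₐ[K] M)}

lemma slice_twist (i : I) (γ : Γ) (f : quasiPeriodic (PartialCharacter.pi τ) M) (x : I → Γ) :
    slice i (twist (PartialCharacter.pi τ) σ (Pi.constMonoidHom I Γ) γ f) x =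
      twist (τ i) σ (.id Γ) γ (slice i f ((Pi.constMonoidHom I Γ γ)⁻¹ * x)) := by
  refine Subtype.ext (funext fun y => ?_)
  rw [slice_apply, twist_apply_apply, twist_apply_apply, slice_apply]
  refine congr_arg (fun z => σ γ (f.1 z)) (funext fun j => ?_)
  obtain rfl | hj := eq_or_ne j i <;> simp [*]

lemma slot_mem_commutant (i : I) (T : crossedProduct (τ i) σ) :
    slot i T.1 ∈ commutant M (twist (PartialCharacter.pi τ) σ (Pi.constMonoidHom I Γ)) :=
  fun γ f => Subtype.ext <| funext fun x => by
    rw [slot_apply_apply, slice_twist, T.2]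
    rfl

variable (τ σ) in
/-- The action of a crossed product on the invariant functions of several variables. -/
noncomputable def slotHom (i : I) : crossedProduct (τ i) σ →ₐ[K]
    Module.End K (twist (PartialCharacter.pi τ) σ (Pi.constMonoidHom I Γ)).invariants :=
  (commutantRestrict M _).comp <|
    (((slot i).restrictScalars K).comp (crossedProduct (τ i) σ).val).codRestrict _
      (slot_mem_commutant i)

lemma commute_slotHom [∀ i, (τ i).domain.FiniteIndex] {i j : I} (hij : i ≠ j)
    (S : crossedProduct (τ i) σ) (T : crossedProduct (τ j) σ) :
    Commute (slotHom τ σ i S) (slotHom τ σ j T) := by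
  have : Commute (⟨_, slot_mem_commutant i S⟩ : commutant M _) ⟨_, slot_mem_commutant j T⟩ :=
    Subtype.ext (commute_slot hij S.1 T.1)
  exact this.map (commutantRestrict M _)

omit [DecidableEq I] in
lemma finrank_invariants_pi [∀ i, (τ i).domain.FiniteIndex] [FiniteDimensional K M] [IsGalois K M]
    (hσ : Function.Surjective σ) (hker : ∀ i, σ.ker ≤ (τ i).domain)
    (hprod : ∀ γ (hγ : γ ∈ σ.ker), ∏ i, (τ i).char ⟨γ, hker i hγ⟩ = 1) :
    Module.finrank K (twist (PartialCharacter.pi τ) σ (Pi.constMonoidHom I Γ)).invariants =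
      ∏ i, (τ i).domain.index := by
  rw [← PartialCharacter.index_pi_domain, ← finrank_quasiPeriodic (M := M) (.pi τ)]
  refine finrank_invariants hσ (fun γ hγ => ?_) twist_smul
  have hmem : Pi.constMonoidHom I Γ γ ∈ (PartialCharacter.pi τ).domain := fun i _ => hker i hγ
  have hchar : (PartialCharacter.pi τ).char ⟨_, hmem⟩ = 1 := hprod γ hγ
  rw [twist_of_mem_ker hγ hmem, map_inv, hchar, inv_one, Units.val_one, one_smul]

end Slots

section FaithfulAction

universe v

variable (k : Type u) [Field k] (G : Type v) [Group G]

/-- The action of a group on the polynomials with variables indexed by the group, by left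
translation of the variables. -/
noncomputable abbrev translateVariables : MulSemiringAction G (MvPolynomial G k) where
  smul g := MvPolynomial.rename (g * ·)
  one_smul p := by
    change MvPolynomial.rename ((1 : G) * ·) p = p
    simp only [one_mul]
    exact MvPolynomial.rename_id_apply p
  mul_smul g h p := by
    change MvPolynomial.rename (g * h * ·) p = MvPolynomial.rename _ (MvPolynomial.rename _ p)
    simp only [MvPolynomial.rename_rename, mul_assoc]
    rfl
  smul_zero _ := map_zero _
  smul_add _ := map_add _
  smul_one _ := map_one _
  smul_mul _ := map_mul _

theorem exists_faithful_action : ∃ (F : Type (max u v)) (_ : Field F) (_ : Algebra k F)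
    (_ : MulSemiringAction G F), FaithfulSMul G F ∧
      ∀ (g : G) (c : k), g • algebraMap k F c = algebraMap k F c := by
  let _ := translateVariables k G
  let _ := IsFractionRing.mulSemiringAction G (MvPolynomial G k) (FractionRing (MvPolynomial G k))
  have hsmul (g : G) (p : MvPolynomial G k) :
      g • algebraMap _ (FractionRing (MvPolynomial G k)) p =
        algebraMap (MvPolynomial G k) _ (g • p) :=
    (algebraMap.smul' g p _).symm
  refine ⟨FractionRing (MvPolynomial G k), inferInstance, inferInstance, inferInstance,
    ⟨fun {g h} hgh => ?_⟩, fun g c => ?_⟩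
  · have hX := hgh (algebraMap (MvPolynomial G k) _ (MvPolynomial.X 1))
    rw [hsmul, hsmul] at hX
    have hgh : MvPolynomial.rename (g * ·) (MvPolynomial.X (1 : G)) =
        MvPolynomial.rename (h * ·) (MvPolynomial.X (R := k) 1) := IsFractionRing.injective _ _ hX
    simpa [MvPolynomial.X_injective.eq_iff] using hgh
  · rw [IsScalarTower.algebraMap_apply k (MvPolynomial G k), hsmul]
    exact congr_arg _ (AlgHom.commutes (MvPolynomial.rename (g * ·)) c)

end FaithfulAction

section HahnSeries

instance {Γ F G : Type*} [AddCommMonoid Γ] [PartialOrder Γ] [IsOrderedCancelAddMonoid Γ]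
    [Semiring F] [Monoid G] [MulSemiringAction G F] : MulSemiringAction G (HahnSeries Γ F) where
  smul_one g := HahnSeries.ext <| funext fun i => by
    simp only [HahnSeries.coeff_smul, HahnSeries.coeff_one]
    split_ifs <;> simp
  smul_mul g _ _ := HahnSeries.map_mul (MulSemiringAction.toRingHom G F g : F →ₙ+* F)

lemma smul_single {Γ F G : Type*} [PartialOrder Γ] [AddMonoid F] [Monoid G]
    [DistribMulAction G F] (g : G) (i : Γ) (a : F) :
    g • HahnSeries.single i a = HahnSeries.single i (g • a) :=
  HahnSeries.ext <| funext fun j => by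
    simp only [HahnSeries.coeff_smul, HahnSeries.coeff_single]
    split_ifs <;> simp

lemma orderTop_smul {Γ F G : Type*} [LinearOrder Γ] [AddMonoid F] [Group G]
    [DistribMulAction G F] (g : G) (x : HahnSeries Γ F) : (g • x).orderTop = x.orderTop :=
  le_antisymm ((HahnSeries.orderTop_le_orderTop_smul g⁻¹ (g • x)).trans_eq <| by
    rw [inv_smul_smul]) (HahnSeries.orderTop_le_orderTop_smul g x)

variable {Γ : Type*} [CommGroup Γ] [LinearOrder Γ] [IsOrderedMonoid Γ] (N : Subgroup Γ)
  (F : Type*) [Field F]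

/-- The lowest exponent of a Hahn series with exponents in a subgroup, taken in the whole group. -/
noncomputable def lowestExponent : Valuation (HahnSeries (Additive N) F)
    (Multiplicative (WithTop (Additive Γ))ᵒᵈ) :=
  ((HahnSeries.addVal (Additive N) F).map N.subtype.toAdditive.withTopMap rfl
    (WithTop.monotone_map_iff.2 fun _ _ h => h)).toValuation

lemma lowestExponent_apply_of_ne_zero {x : HahnSeries (Additive N) F} (hx : x ≠ 0) :
    lowestExponent N F x =
      .ofAdd (.toDual ((Additive.ofMul (x.order.toMul : Γ) : Additive Γ) : WithTop _)) := by
  change Multiplicative.ofAdd (OrderDual.toDual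
    (WithTop.map _ (HahnSeries.addVal (Additive N) F x))) = _
  rw [HahnSeries.addVal_apply_of_ne hx]
  rfl

variable (Γ) in
/-- The embedding of `Γ` in the value group of `lowestExponent`. -/
def exponent : Γ →* Multiplicative (WithTop (Additive Γ))ᵒᵈ where
  toFun γ := .ofAdd (.toDual ((Additive.ofMul γ : Additive Γ) : WithTop _))
  map_one' := rfl
  map_mul' _ _ := rfl

/-- The Hahn series with a single term, of coefficient `1`. -/
noncomputable def monomial : N →* HahnSeries (Additive N) F where
  toFun γ := .single (.ofMul γ) 1
  map_one' := rfl
  map_mul' γ δ := by rw [HahnSeries.single_mul_single, one_mul]; rfl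

variable {N F} in
lemma lowestExponent_smul {G : Type*} [Group G] [MulSemiringAction G F] (g : G)
    (x : HahnSeries (Additive N) F) : lowestExponent N F (g • x) = lowestExponent N F x := by
  change Multiplicative.ofAdd (OrderDual.toDual (WithTop.map _ (g • x).orderTop)) = _
  rw [orderTop_smul]
  rfl

lemma lowestExponent_monomial (γ : N) : lowestExponent N F (monomial N F γ) = exponent Γ γ := by
  rw [lowestExponent_apply_of_ne_zero _ _ (x := monomial N F γ)
    (HahnSeries.single_ne_zero one_ne_zero)]
  simp only [monomial, MonoidHom.coe_mk, OneHom.coe_mk, HahnSeries.order_single one_ne_zero]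
  rfl

lemma mem_of_lowestExponent_eq_exponent {x : HahnSeries (Additive N) F} (hx : x ≠ 0) {γ : Γ}
    (h : lowestExponent N F x = exponent Γ γ) : γ ∈ N := by
  rw [lowestExponent_apply_of_ne_zero _ _ hx] at h
  have : (x.order.toMul : Γ) = γ := WithTop.coe_injective h
  exact this ▸ x.order.toMul.2

end HahnSeries

section Ramified

instance {Γ F G : Type*} [CommGroup Γ] [LinearOrder Γ] [IsOrderedMonoid Γ] [Field F] [Monoid G]
    [MulSemiringAction G F] [FaithfulSMul G F] : FaithfulSMul G (HahnSeries (Additive Γ) F) where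
  eq_of_smul_eq_smul {g h} hgh := eq_of_smul_eq_smul fun a : F =>
    HahnSeries.single_injective 0 <|
      (smul_single g 0 a).symm.trans ((hgh _).trans (smul_single h 0 a))

/-- The embedding of the constants fixed by `G` in the Hahn series fixed by `G`. -/
noncomputable def fixedConstants (N : Type*) {k F : Type*} (G : Type*) [CommGroup N]
    [LinearOrder N] [IsOrderedMonoid N] [Field k] [Field F] [Algebra k F] [Group G]
    [MulSemiringAction G F] (hk : ∀ (g : G) (c : k), g • algebraMap k F c = algebraMap k F c) :
    k →+* FixedPoints.subfield G (HahnSeries (Additive N) F) :=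
  (HahnSeries.C.comp (algebraMap k F)).codRestrict (FixedPoints.subfield G _) fun c g => by
    simp only [RingHom.comp_apply, HahnSeries.C_apply, smul_single, hk]

theorem exists_isRamified (k : Type u) [Field k] {Γ G : Type} [CommGroup Γ] [LinearOrder Γ]
    [IsOrderedMonoid Γ] [Group G] [Finite G] {π : Γ →* G} (hπ : Function.Surjective π) :
    ∃ (K M : Type u) (_ : Field K) (_ : Field M) (_ : Algebra k K) (_ : Algebra K M)
      (σ : Γ →* (M ≃ₐ[K] M)) (τ : PartialCharacter K Γ)
      (v : Valuation M (Multiplicative (WithTop (Additive Γ))ᵒᵈ))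
      (w : Γ →* Multiplicative (WithTop (Additive Γ))ᵒᵈ),
      FiniteDimensional K M ∧ IsGalois K M ∧ Function.Surjective σ ∧ σ.ker = π.ker ∧
      τ.domain = π.ker ∧ τ.IsRamified v w ∧ ∀ γ a, v (σ γ a) = v a := by
  obtain ⟨F, _, _, _, _, hk⟩ := exists_faithful_action k G
  have := Fintype.ofFinite G
  let M := HahnSeries (Additive π.ker) F
  let K := FixedPoints.subfield G M
  let χ : π.ker →* K :=
    { toFun γ := ⟨monomial π.ker F γ, fun g => by
        rw [monomial, MonoidHom.coe_mk, OneHom.coe_mk, smul_single, smul_one]⟩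
      map_one' := Subtype.ext (map_one _)
      map_mul' _ _ := Subtype.ext (map_mul _ _ _) }
  refine ⟨K, M, inferInstance, inferInstance, (fixedConstants π.ker G hk).toAlgebra, inferInstance,
    (MulSemiringAction.toAlgAut G K M).comp π, ⟨π.ker, χ.toHomUnits⟩, lowestExponent π.ker F,
    exponent Γ, inferInstance, inferInstance, (FixedPoints.toAlgAut_surjective G M).comp hπ, ?_,
    rfl, ⟨lowestExponent_monomial _ _, ?_⟩, fun γ => lowestExponent_smul (π γ)⟩
  · rw [← MonoidHom.comap_ker, (MonoidHom.ker_eq_bot_iff _).2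
      (FixedPoints.toAlgAut_bijective G M).injective]
    rfl
  · exact fun a ha γ h => mem_of_lowestExponent_eq_exponent _ _ ha h

end Ramified

section Comap

variable {K M Γ Γ' : Type*} [Field K] [Field M] [Algebra K M] [CommGroup Γ] [CommGroup Γ']

/-- The pullback of a partial character along a group homomorphism. -/
def PartialCharacter.comap (τ : PartialCharacter K Γ') (φ : Γ →* Γ') : PartialCharacter K Γ where
  domain := τ.domain.comap φ
  char := τ.char.comp (φ.subgroupComap τ.domain)

instance (τ : PartialCharacter K Γ') [τ.domain.FiniteIndex] (φ : Γ →* Γ') :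
    (τ.comap φ).domain.FiniteIndex where
  index_ne_zero := by
    change (τ.domain.comap φ).index ≠ 0
    rw [Subgroup.index_comap]
    exact Subgroup.isFiniteRelIndex_of_finiteIndex.relIndex_ne_zero

lemma PartialCharacter.IsRamified.comap {Γ₀ : Type*} [LinearOrderedCommGroupWithZero Γ₀]
    {τ : PartialCharacter K Γ'} {v : Valuation M Γ₀} {w : Γ' →* Γ₀} (h : τ.IsRamified v w)
    (φ : Γ →* Γ') : (τ.comap φ).IsRamified v (w.comp φ) where
  valuation_char l := h.valuation_char ⟨φ l, l.2⟩
  mem_domain a ha γ := h.mem_domain a ha (φ γ)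

end Comap

/-- A family of central division algebras over `K` whose Brauer classes are the values of a
homomorphism `L → Br K`. In the absence of a Brauer group this is encoded by letting the algebras
of a family of classes of sum zero act, with commuting images, on a space whose dimension is the
product of their degrees. -/
structure DivisionSystem (K : Type u) [Field K] (L : Type*) [AddCommGroup L] where
  carrier : L → Type u
  [divisionRing : ∀ a, DivisionRing (carrier a)]
  [algebra : ∀ a, Algebra K (carrier a)]
  [isCentral : ∀ a, Algebra.IsCentral K (carrier a)]
  degree : L → ℕ
  degree_pos : ∀ a, 0 < degree a
  finrank_carrier : ∀ a, Module.finrank K (carrier a) = degree a ^ 2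
  exists_action : ∀ {I : Type} [Fintype I] (e : I → L), ∑ i, e i = 0 →
    ∃ (S : Type u) (_ : AddCommGroup S) (_ : Module K S) (f : ∀ i, carrier (e i) →ₐ[K]
      Module.End K S), Module.finrank K S = ∏ i, degree (e i) ∧
      Pairwise fun i j => ∀ x y, Commute (f i x) (f j y)

attribute [instance] DivisionSystem.divisionRing DivisionSystem.algebra DivisionSystem.isCentral

section OfRamified

variable {K M : Type u} {Γ : Type} {Γ₀ : Type*} [Field K] [Field M] [Algebra K M]
  [FiniteDimensional K M] [IsGalois K M] [CommGroup Γ] [LinearOrderedCommGroupWithZero Γ₀]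
  {τ : PartialCharacter K Γ} [τ.domain.FiniteIndex] {v : Valuation M Γ₀} {w : Γ →* Γ₀}
  {σ : Γ →* (M ≃ₐ[K] M)} {L : Type*} [AddCommGroup L]

lemma prod_char_comap {I : Type*} [Fintype I] (τ : PartialCharacter K Γ)
    (φ : I → Γ →* Γ) (hφ : ∏ i, φ i = 1) {γ : Γ} (hγ : ∀ i, γ ∈ (τ.comap (φ i)).domain) :
    ∏ i, (τ.comap (φ i)).char ⟨γ, hγ i⟩ = 1 := calc
  ∏ i, (τ.comap (φ i)).char ⟨γ, hγ i⟩ = τ.char (∏ i, ⟨φ i γ, hγ i⟩) := (map_prod τ.char _ _).symm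
  _ = τ.char 1 := congr_arg _ <| Subtype.ext <| by
    rw [Subgroup.val_finsetProd, ← MonoidHom.finsetProd_apply, hφ]
    rfl
  _ = 1 := map_one _

lemma exists_crossedProduct_actions {I : Type} [Fintype I] (τ : I → PartialCharacter K Γ)
    [∀ i, (τ i).domain.FiniteIndex] (hσ : Function.Surjective σ)
    (hker : ∀ i, σ.ker ≤ (τ i).domain)
    (hprod : ∀ γ (hγ : γ ∈ σ.ker), ∏ i, (τ i).char ⟨γ, hker i hγ⟩ = 1) :
    ∃ (S : Type u) (_ : AddCommGroup S) (_ : Module K S)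
      (f : ∀ i, crossedProduct (τ i) σ →ₐ[K] Module.End K S),
      Module.finrank K S = ∏ i, (τ i).domain.index ∧
      Pairwise fun i j => ∀ x y, Commute (f i x) (f j y) := by
  classical
  exact ⟨(twist (.pi τ) σ (Pi.constMonoidHom I Γ)).invariants, inferInstance, inferInstance,
    slotHom τ σ, finrank_invariants_pi hσ hker hprod, fun i j hij => commute_slotHom hij⟩

/-- The crossed products of the pullbacks of a ramified partial character. -/
noncomputable def DivisionSystem.ofRamified (h : τ.IsRamified v w)
    (hv : ∀ γ a, v (σ γ a) = v a) (hσ : Function.Surjective σ) (φ : Multiplicative L →* (Γ →* Γ))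
    (hφ : ∀ a, σ.ker ≤ (τ.comap (φ a)).domain) : DivisionSystem K L where
  carrier a := crossedProduct (τ.comap (φ (.ofAdd a))) σ
  divisionRing a :=
    have : FiniteDimensional K (crossedProduct (τ.comap (φ (.ofAdd a))) σ) :=
      Module.finite_of_finrank_pos <| by
        rw [finrank_crossedProduct hσ (hφ _)]
        exact pow_pos (Nat.pos_of_ne_zero Subgroup.FiniteIndex.index_ne_zero) 2
    have := (h.comap (φ (.ofAdd a))).isDomain hv
    divisionRingOfFiniteDimensional K _
  algebra a := inferInstance
  isCentral a := isCentral_crossedProduct hσ (hφ _)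
  degree a := (τ.comap (φ (.ofAdd a))).domain.index
  degree_pos a := Nat.pos_of_ne_zero Subgroup.FiniteIndex.index_ne_zero
  finrank_carrier a := finrank_crossedProduct hσ (hφ _)
  exists_action e he :=
    exists_crossedProduct_actions (fun i => τ.comap (φ (.ofAdd (e i)))) hσ (fun i => hφ _)
      fun γ hγ => prod_char_comap τ _ (by rw [← map_prod, ← ofAdd_sum, he]; exact map_one φ)
        fun i => hφ _ hγ

end OfRamified

section TensorProducts

lemma prod_ofFn_mul {R : Type*} [Monoid R] {m : ℕ} (x y : Fin m → R)
    (h : Pairwise fun i j => Commute (x i) (y j)) :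
    (List.ofFn fun i => x i * y i).prod = (List.ofFn x).prod * (List.ofFn y).prod := by
  induction m with
  | zero => simp
  | succ m ih =>
    have hcomm : Commute (List.ofFn fun i : Fin m => x i.succ).prod (y 0) :=
      Commute.list_prod_left _ _ fun z hz => by
        obtain ⟨i, rfl⟩ := List.mem_ofFn.1 hz
        exact h (Fin.succ_ne_zero i)
    simp only [List.ofFn_succ, List.prod_cons]
    rw [ih _ _ fun i j hij => h (by simpa using hij), hcomm.mul_mul_mul_comm]

variable {K R : Type*} [Field K] [Ring R] [Algebra K R]

theorem exists_piTensorProduct_algHom {m : ℕ} {A : Fin m → Type*} [∀ i, Ring (A i)]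
    [∀ i, Algebra K (A i)] (f : ∀ i, A i →ₐ[K] R)
    (hf : Pairwise fun i j => ∀ x y, Commute (f i x) (f j y)) :
    ∃ F : (⨂[K] i, A i) →ₐ[K] R,
      ∀ z, (∀ i x, Commute z (f i x)) → ∀ X, Commute z (F X) := by
  let g : MultilinearMap K A R :=
    (MultilinearMap.mkPiAlgebraFin K m R).compLinearMap fun i => (f i).toLinearMap
  have hg (x : ∀ i, A i) : g x = (List.ofFn fun i => f i (x i)).prod := by simp [g]
  have one : g 1 = 1 := by simp [hg]
  have mul (x y : ∀ i, A i) : g (x * y) = g x * g y := by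
    simp only [hg, Pi.mul_apply, map_mul]
    exact prod_ofFn_mul _ _ fun i j hij => hf hij _ _
  refine ⟨PiTensorProduct.liftAlgHom g one mul, fun z hz X => ?_⟩
  induction X using PiTensorProduct.induction_on with
  | smul_tprod c x =>
    have : PiTensorProduct.liftAlgHom g one mul (PiTensorProduct.tprod K x) = g x :=
      PiTensorProduct.lift.tprod x
    rw [map_smul, this, hg]
    refine (Commute.list_prod_right _ _ fun w hw => ?_).smul_right c
    obtain ⟨i, rfl⟩ := List.mem_ofFn.1 hw
    exact hz _ _
  | add X Y hX hY => rw [map_add]; exact hX.add_right hY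

lemma commute_singleAlgHom {ι : Type*} [DecidableEq ι] {A : ι → Type*} [∀ i, Ring (A i)]
    [∀ i, Algebra K (A i)] {i j : ι} (hij : i ≠ j) (x : A i) (y : A j) :
    Commute (PiTensorProduct.singleAlgHom (R := K) i x)
      (PiTensorProduct.singleAlgHom (R := K) j y) :=
  Commute.tprod (Pi.mulSingle_commute hij x y)

lemma finrank_piTensorProduct {ι : Type*} [Fintype ι] (A : ι → Type*)
    [∀ i, AddCommGroup (A i)] [∀ i, Module K (A i)] [∀ i, FiniteDimensional K (A i)] :
    Module.finrank K (⨂[K] i, A i) = ∏ i, Module.finrank K (A i) := by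
  classical
  rw [Module.finrank_eq_card_basis (Basis.piTensorProduct fun i => Module.finBasis K (A i))]
  simp

section TensorPowers

variable {r : ℕ} {A : Fin r → Type*} [∀ j, Ring (A j)] [∀ j, Algebra K (A j)] {p : Fin r → ℕ}

theorem exists_tensorPowers_algHom (f : ∀ i : Σ j, Fin (p j), A i.1 →ₐ[K] R)
    (hf : Pairwise fun i j => ∀ x y, Commute (f i x) (f j y)) :
    ∃ F : (⨂[K] j, ⨂[K] _ : Fin (p j), A j) →ₐ[K] R,
      ∀ z, (∀ i x, Commute z (f i x)) → ∀ X, Commute z (F X) := by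
  have hpow (j) : ∃ F : (⨂[K] _ : Fin (p j), A j) →ₐ[K] R,
      ∀ z, (∀ a x, Commute z (f ⟨j, a⟩ x)) → ∀ X, Commute z (F X) :=
    exists_piTensorProduct_algHom (fun a => f ⟨j, a⟩) fun a b hab => hf (by simpa using hab)
  choose F hF using hpow
  obtain ⟨F', hF'⟩ := exists_piTensorProduct_algHom F fun i j hij X Y =>
    hF j _ (fun b y => (hF i _ (fun a x => (hf (by simp [hij]) x y).symm) X).symm) Y
  exact ⟨F', fun z hz => hF' z fun j => hF j z fun a => hz ⟨j, a⟩⟩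

variable (K A p) in
/-- The embedding of one of the factors of a tensor product of tensor powers. -/
noncomputable def tensorPowersFactor (i : Σ j, Fin (p j)) :
    A i.1 →ₐ[K] ⨂[K] j, ⨂[K] _ : Fin (p j), A j :=
  (PiTensorProduct.singleAlgHom (A := fun j => ⨂[K] _ : Fin (p j), A j) i.1).comp
    (PiTensorProduct.singleAlgHom (A := fun _ => A i.1) i.2)

lemma commute_tensorPowersFactor {i j : Σ j, Fin (p j)} (hij : i ≠ j) (x : A i.1) (y : A j.1) :
    Commute (tensorPowersFactor K A p i x) (tensorPowersFactor K A p j y) := by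
  obtain ⟨i, a⟩ := i
  obtain ⟨j, b⟩ := j
  obtain rfl | hne := eq_or_ne i j
  · have hab : a ≠ b := fun hab => hij (by rw [hab])
    exact (commute_singleAlgHom (A := fun _ => A i) hab x y).map
      (PiTensorProduct.singleAlgHom (R := K) (A := fun j => ⨂[K] _ : Fin (p j), A j) i)
  · exact commute_singleAlgHom hne _ _

lemma finrank_tensorPowers [∀ j, FiniteDimensional K (A j)] :
    Module.finrank K (⨂[K] j, ⨂[K] _ : Fin (p j), A j) = ∏ j, Module.finrank K (A j) ^ p j := by
  simp [finrank_piTensorProduct]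

end TensorPowers
end TensorProducts

section Matrices

variable {K R S : Type*} [Field K] [Ring R] [Algebra K R] [AddCommGroup S] [Module K S]

lemma commute_scalarAlgHom {n : Type*} [Fintype n] [DecidableEq n] {z : R} {X : Matrix n n R}
    (h : ∀ i j, Commute z (X i j)) : Commute (Matrix.scalarAlgHom n K z) X :=
  Matrix.scalar_commute_iff.2 <| Matrix.ext fun i j => h i j

lemma exists_matrix_action {P : Type*} [Ring P] [Algebra K P] (F : P →ₐ[K] Module.End K S)
    (n : Type*) [Fintype n] [DecidableEq n] :
    ∃ (H : Matrix n n P →ₐ[K] Module.End K (n → S))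
      (Δ : Module.End K S →ₐ[K] Module.End K (n → S)),
      ∀ z, (∀ x, Commute z (F x)) → ∀ X, Commute (Δ z) (H X) :=
  let W : Matrix n n (Module.End K S) →ₐ[K] Module.End K (n → S) :=
    (endVecAlgEquivMatrixEnd n K K S).symm.toAlgHom
  ⟨W.comp F.mapMatrix, W.comp (Matrix.scalarAlgHom n K),
    fun _ hz _ => (commute_scalarAlgHom (K := K) fun _ _ => hz _).map W⟩

lemma exists_commuting_embeddings (K B Q n : Type*) [Field K] [Ring B] [Algebra K B] [Ring Q]
    [Algebra K Q] [Fintype n] [DecidableEq n] :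
    ∃ (θ : Matrix n n K →ₐ[K] Matrix n n (B ⊗[K] Q)) (β : B →ₐ[K] Matrix n n (B ⊗[K] Q))
      (ρ : Q →ₐ[K] Matrix n n (B ⊗[K] Q)), (∀ X b, Commute (θ X) (β b)) ∧
      (∀ X x, Commute (θ X) (ρ x)) ∧ ∀ x b, Commute (ρ x) (β b) := by
  let diag : B ⊗[K] Q →ₐ[K] Matrix n n (B ⊗[K] Q) := Matrix.scalarAlgHom n K
  have hdiag (X : Matrix n n K) (z) :
      Commute ((Algebra.ofId K (B ⊗[K] Q)).mapMatrix X) (diag z) :=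
    (commute_scalarAlgHom fun i j => (Algebra.commutes (X i j) z).symm).symm
  refine ⟨(Algebra.ofId K (B ⊗[K] Q)).mapMatrix,
    diag.comp Algebra.TensorProduct.includeLeft, diag.comp Algebra.TensorProduct.includeRight,
    fun X b => hdiag X _, fun X x => hdiag X _, fun x b => ?_⟩
  have : Commute ((1 : B) ⊗ₜ[K] x) (b ⊗ₜ[K] (1 : Q)) := by simp [Commute, SemiconjBy]
  exact this.map diag

lemma commute_lift {C C' : Type*} [Ring C] [Algebra K C] [Ring C'] [Algebra K C']
    (f : C →ₐ[K] R) (g : C' →ₐ[K] R) (hfg : ∀ x y, Commute (f x) (g y)) {z : R}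
    (hf : ∀ x, Commute z (f x)) (hg : ∀ y, Commute z (g y)) (w : C ⊗[K] C') :
    Commute z (Algebra.TensorProduct.lift f g hfg w) := by
  induction w using TensorProduct.induction_on with
  | zero => rw [map_zero]; exact Commute.zero_right z
  | tmul x y => rw [Algebra.TensorProduct.lift_tmul]; exact (hf x).mul_right (hg y)
  | add x y hx hy => rw [map_add]; exact hx.add_right hy

lemma exists_matrix_algHom_of_commuting_actions {C C' X : Type*} [DivisionRing C] [Algebra K C]
    [FiniteDimensional K C] [Algebra.IsCentral K C] [DivisionRing C'] [Algebra K C']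
    [AddCommGroup X] [Module K X] {f : C →ₐ[K] Module.End K X} {g : C' →ₐ[K] Module.End K X}
    (hfg : ∀ x y, Commute (f x) (g y)) (hC' : Module.finrank K C' = Module.finrank K C)
    (hX : Module.finrank K X = Module.finrank K C) {f' : C →ₐ[K] R} {g' : C' →ₐ[K] R}
    (hfg' : ∀ x y, Commute (f' x) (g' y)) :
    ∃ ξ : Matrix (Fin (Module.finrank K C)) (Fin (Module.finrank K C)) K →ₐ[K] R,
      ∀ z, (∀ x, Commute z (f' x)) → (∀ y, Commute z (g' y)) → ∀ X, Commute z (ξ X) := by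
  have : FiniteDimensional K X := Module.finite_of_finrank_pos (hX ▸ Module.finrank_pos)
  let e : C ⊗[K] C' ≃ₐ[K] Module.End K X :=
    .ofBijective _ (lift_bijective_of_commuting_actions f g hfg hC' hX)
  let m := (algEquivMatrix (Module.finBasisOfFinrankEq K X hX)).symm.trans e.symm
  exact ⟨(Algebra.TensorProduct.lift f' g' hfg').comp m.toAlgHom,
    fun z hf hg X => commute_lift f' g' hfg' hf hg (m X)⟩

end Matrices

lemma eq_sq_of_dvd {b s t x y δ v : ℕ} (hb : 0 < b) (hs : 0 < s) (hy : 0 < y) (hδ : 0 < δ)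
    (hv : t * (x * y * δ) = s * y ^ 2 * v) (hst : s * s * (b * y ^ 2) = t * t * x ^ 2)
    (hbv : b ∣ v) (hδv : δ ^ 2 ∣ v) : b = δ ^ 2 := by
  have hsq : b * δ ^ 2 = v ^ 2 := by
    have hpos : 0 < s ^ 2 * y ^ 4 := by positivity
    apply Nat.eq_of_mul_eq_mul_left hpos
    calc s ^ 2 * y ^ 4 * (b * δ ^ 2) = s * s * (b * y ^ 2) * (y ^ 2 * δ ^ 2) := by ring
      _ = (t * (x * y * δ)) ^ 2 := by rw [hst]; ring
      _ = s ^ 2 * y ^ 4 * v ^ 2 := by rw [hv]; ring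
  refine Nat.dvd_antisymm ?_ ?_
  · obtain ⟨c, rfl⟩ := hbv
    exact ⟨c ^ 2, Nat.eq_of_mul_eq_mul_left hb (by rw [hsq]; ring)⟩
  · obtain ⟨c, rfl⟩ := hδv
    exact ⟨c ^ 2, Nat.eq_of_mul_eq_mul_left (pow_pos hδ 2) (by rw [mul_comm, hsq]; ring)⟩

namespace DivisionSystem

variable {K : Type u} [Field K] {L : Type*} [AddCommGroup L] (D : DivisionSystem K L)

instance (a : L) : FiniteDimensional K (D.carrier a) :=
  Module.finite_of_finrank_pos <| by
    rw [D.finrank_carrier]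
    exact pow_pos (D.degree_pos a) 2

lemma exists_action_neg (a : L) : ∃ (X : Type u) (_ : AddCommGroup X) (_ : Module K X)
    (f : D.carrier a →ₐ[K] Module.End K X) (g : D.carrier (-a) →ₐ[K] Module.End K X),
    Module.finrank K X = D.degree a * D.degree (-a) ∧ ∀ x y, Commute (f x) (g y) := by
  obtain ⟨X, _, _, f, hX, hf⟩ :=
    D.exists_action (fun b : Bool => b.rec a (-a)) (by simp)
  exact ⟨X, _, _, f false, f true, by simpa [mul_comm] using hX, hf Bool.false_ne_true⟩

lemma degree_neg (a : L) : D.degree (-a) = D.degree a := by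
  have key (a : L) : D.degree a ∣ D.degree (-a) := by
    obtain ⟨X, _, _, f, -, hX, -⟩ := D.exists_action_neg a
    have : FiniteDimensional K X := Module.finite_of_finrank_pos <|
      hX ▸ mul_pos (D.degree_pos a) (D.degree_pos _)
    have := finrank_dvd_finrank_of_divisionRing f ⊤ fun _ _ _ => trivial
    rw [finrank_top, hX, D.finrank_carrier, sq] at this
    exact Nat.dvd_of_mul_dvd_mul_left (D.degree_pos a) this
  exact Nat.dvd_antisymm (by simpa using key (-a)) (key a)

lemma exists_matrix_algHom {R : Type*} [Ring R] [Algebra K R] {a : L} {f : D.carrier a →ₐ[K] R}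
    {g : D.carrier (-a) →ₐ[K] R} (hfg : ∀ x y, Commute (f x) (g y)) :
    ∃ ξ : Matrix (Fin (D.degree a ^ 2)) (Fin (D.degree a ^ 2)) K →ₐ[K] R,
      ∀ z, (∀ x, Commute z (f x)) → (∀ y, Commute z (g y)) → ∀ X, Commute z (ξ X) := by
  obtain ⟨X, _, _, f', g', hX, hfg'⟩ := D.exists_action_neg a
  rw [← D.finrank_carrier]
  refine exists_matrix_algHom_of_commuting_actions hfg' ?_ ?_ hfg
  · rw [D.finrank_carrier, D.finrank_carrier, D.degree_neg]
  · rw [hX, D.finrank_carrier, D.degree_neg, sq]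

theorem exists_submodule_finrank_mul {U ι : Type*} [AddCommGroup U] [Module K U]
    [FiniteDimensional K U] [Fintype ι] (a : ι → L) {s : ℕ} (hs : 0 < s)
    (θ : Matrix (Fin s) (Fin s) K →ₐ[K] Module.End K U)
    (f : ∀ i, D.carrier (a i) →ₐ[K] Module.End K U)
    (g : ∀ i, D.carrier (-a i) →ₐ[K] Module.End K U)
    (hθf : ∀ i X x, Commute (θ X) (f i x)) (hθg : ∀ i X y, Commute (θ X) (g i y))
    (hff : Pairwise fun i j => ∀ x y, Commute (f i x) (f j y))
    (hgg : Pairwise fun i j => ∀ x y, Commute (g i x) (g j y))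
    (hfg : ∀ i j x y, Commute (f i x) (g j y)) :
    ∃ V : Submodule K U,
      Module.finrank K U = s * (∏ i, D.degree (a i) ^ 2) * Module.finrank K V ∧
      ∀ z, (∀ X, Commute (θ X) z) → (∀ i x, Commute (f i x) z) → (∀ i y, Commute (g i y) z) →
        ∀ v ∈ V, z v ∈ V := by
  choose ξ hξ using fun i => D.exists_matrix_algHom (hfg i i)
  let size : Option ι → ℕ := fun o => o.elim s fun i => D.degree (a i) ^ 2
  let Θ : ∀ o, Matrix (Fin (size o)) (Fin (size o)) K →ₐ[K] Module.End K U
    | none => θ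
    | some i => ξ i
  have (o : Option ι) : Nonempty (Fin (size o)) := Fin.pos_iff_nonempty.1 <| by
    cases o
    exacts [hs, pow_pos (D.degree_pos _) 2]
  have hθξ (i) (X) (Y) : Commute (θ X) (ξ i Y) := hξ i _ (hθf i X) (hθg i X) Y
  have hξξ : Pairwise fun i j => ∀ X Y, Commute (ξ i X) (ξ j Y) := fun i j hij X Y =>
    hξ j _ (fun y => (hξ i _ (hff hij.symm y) (hfg j i y) X).symm)
      (fun y => (hξ i _ (fun x => (hfg i j x y).symm) (hgg hij.symm y) X).symm) Y
  obtain ⟨V, hV, hVz⟩ := exists_submodule_finrank_mul_of_family Finset.univ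
    (fun o => Fin (size o)) Θ (by
      rintro (_ | i) (_ | j) hij X Y
      · exact (hij rfl).elim
      · exact hθξ j X Y
      · exact (hθξ i Y X).symm
      · exact hξξ (by simpa using hij) X Y)
  refine ⟨V, by simpa [size] using hV, fun z hθ hf hg => hVz z ?_⟩
  rintro (_ | i) - X
  · exact hθ X
  · exact (hξ i z (fun x => (hf i x).symm) (fun y => (hg i y).symm) X).symm

theorem exists_dvd_of_matrix_algHom {ι S B C P Q : Type*} [Fintype ι] [AddCommGroup S]
    [Module K S] [FiniteDimensional K S] [DivisionRing B] [Algebra K B] [DivisionRing C]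
    [Algebra K C] [Ring P] [Algebra K P] [Ring Q] [Algebra K Q] {a : ι → L}
    {e : ∀ i, D.carrier (a i) →ₐ[K] Q} {F : P →ₐ[K] Module.End K S}
    {g : ∀ i, D.carrier (-a i) →ₐ[K] Module.End K S} {h : C →ₐ[K] Module.End K S}
    (hee : Pairwise fun i j => ∀ x y, Commute (e i x) (e j y))
    (hgg : Pairwise fun i j => ∀ x y, Commute (g i x) (g j y))
    (hgF : ∀ i y X, Commute (g i y) (F X)) (hhF : ∀ c X, Commute (h c) (F X))
    (hgh : ∀ i y c, Commute (g i y) (h c)) {s t : ℕ} (hs : 0 < s)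
    (Φ : Matrix (Fin s) (Fin s) (B ⊗[K] Q) →ₐ[K] Matrix (Fin t) (Fin t) P) :
    ∃ v, t * Module.finrank K S = s * (∏ i, D.degree (a i)) ^ 2 * v ∧
      Module.finrank K B ∣ v ∧ Module.finrank K C ∣ v := by
  obtain ⟨H, Δ, hΔ⟩ := exists_matrix_action F (Fin t)
  obtain ⟨θ, β, ρ, hθβ, hθρ, hρβ⟩ := exists_commuting_embeddings K B Q (Fin s)
  let H' := H.comp Φ
  have hg (i y X) : Commute (H' X) (Δ (g i y)) := (hΔ _ (hgF i y) _).symm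
  have hh (c X) : Commute (H' X) (Δ (h c)) := (hΔ _ (hhF c) _).symm
  obtain ⟨V, hV, hVz⟩ := D.exists_submodule_finrank_mul (U := Fin t → S) _ hs (H'.comp θ)
    (fun i => (H'.comp ρ).comp (e i)) (fun i => Δ.comp (g i))
    (fun i X x => (hθρ X _).map H') (fun i X y => hg i y _)
    (fun i j hij x y => (hee hij x y).map (H'.comp ρ))
    (fun i j hij x y => (hgg hij x y).map Δ) (fun i j x y => hg j y _)
  refine ⟨Module.finrank K V, ?_, finrank_dvd_finrank_of_divisionRing (H'.comp β) V fun b => ?_,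
    finrank_dvd_finrank_of_divisionRing (Δ.comp h) V fun c => ?_⟩
  · rw [← Finset.prod_pow, ← hV, Module.finrank_pi_fintype, Fin.sum_const, smul_eq_mul]
  · exact hVz _ (fun X => (hθβ X b).map H') (fun i x => (hρβ _ b).map H')
      (fun i y => (hg i y _).symm)
  · exact hVz _ (fun X => hh c _) (fun i x => hh c _) (fun i y => (hgh i y c).map Δ)

variable {r : ℕ} (a : Fin r → L) (p q : Fin r → ℕ)

lemma finrank_tensorPowers_carrier :
    Module.finrank K (⨂[K] j, ⨂[K] _ : Fin (p j), D.carrier (a j)) =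
      (∏ i : Σ j, Fin (p j), D.degree (a i.1)) ^ 2 := by
  simp only [finrank_tensorPowers, finrank_carrier, Fintype.prod_sigma, Finset.prod_const,
    Finset.card_univ, Fintype.card_fin, ← Finset.prod_pow, pow_right_comm]

lemma exists_action_tensorPowers :
    ∃ (S : Type u) (_ : AddCommGroup S) (_ : Module K S)
      (F : (⨂[K] j, ⨂[K] _ : Fin (p j), D.carrier (a j)) →ₐ[K] Module.End K S)
      (g : ∀ i : Σ j, Fin (q j), D.carrier (-a i.1) →ₐ[K] Module.End K S)
      (h : D.carrier (-∑ j, ((p j : ℤ) - q j) • a j) →ₐ[K] Module.End K S),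
      Module.finrank K S = (∏ i : Σ j, Fin (p j), D.degree (a i.1)) *
        (∏ i : Σ j, Fin (q j), D.degree (a i.1)) *
          D.degree (∑ j, ((p j : ℤ) - q j) • a j) ∧
      (Pairwise fun i j => ∀ x y, Commute (g i x) (g j y)) ∧
      (∀ i y X, Commute (g i y) (F X)) ∧ (∀ c X, Commute (h c) (F X)) ∧
      ∀ i y c, Commute (g i y) (h c) := by
  set κ := ∑ j, ((p j : ℤ) - q j) • a j with hκ
  obtain ⟨S, _, _, f, hS, hf⟩ := D.exists_action
    (Sum.elim (Sum.elim (fun i : Σ j, Fin (p j) => a i.1) fun i : Σ j, Fin (q j) => -a i.1)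
      fun _ : Unit => -κ)
    (by simp [hκ, Fintype.sum_sigma, sub_eq_add_neg, add_smul, Finset.sum_add_distrib])
  obtain ⟨F, hF⟩ := exists_tensorPowers_algHom (A := fun j => D.carrier (a j))
    (fun i : Σ j, Fin (p j) => f (.inl (.inl i)))
    fun i j hij => @hf (.inl (.inl i)) (.inl (.inl j)) (by simpa using hij)
  refine ⟨S, _, _, F, fun i => f (.inl (.inr i)), f (.inr ()), ?_,
    fun i j hij => @hf (.inl (.inr i)) (.inl (.inr j)) (by simpa using hij),
    fun i y => hF _ fun j => @hf (.inl (.inr i)) (.inl (.inl j)) (by simp) y,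
    fun c => hF _ fun j => @hf (.inr ()) (.inl (.inl j)) (by simp) c,
    fun i => @hf (.inl (.inr i)) (.inr ()) (by simp)⟩
  simpa [degree_neg] using hS

theorem finrank_eq_degree_sq {B : Type*} [DivisionRing B] [Algebra K B]
    [FiniteDimensional K B] {s t : ℕ} (hs : 0 < s)
    (Φ : Matrix (Fin s) (Fin s) (B ⊗[K] (⨂[K] j, ⨂[K] _ : Fin (q j), D.carrier (a j))) ≃ₐ[K]
      Matrix (Fin t) (Fin t) (⨂[K] j, ⨂[K] _ : Fin (p j), D.carrier (a j))) :
    Module.finrank K B = D.degree (∑ j, ((p j : ℤ) - q j) • a j) ^ 2 := by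
  obtain ⟨S, _, _, F, g, h, hS, hgg, hgF, hhF, hgh⟩ := D.exists_action_tensorPowers a p q
  have hδ := D.degree_pos (∑ j, ((p j : ℤ) - q j) • a j)
  have hx : 0 < ∏ i : Σ j, Fin (p j), D.degree (a i.1) := Finset.prod_pos fun i _ => D.degree_pos _
  have hy : 0 < ∏ i : Σ j, Fin (q j), D.degree (a i.1) := Finset.prod_pos fun i _ => D.degree_pos _
  have : FiniteDimensional K S := Module.finite_of_finrank_pos <| by
    rw [hS]
    positivity
  obtain ⟨v, hv, hBv, hCv⟩ := D.exists_dvd_of_matrix_algHom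
    (e := tensorPowersFactor K (fun j => D.carrier (a j)) q)
    (fun i j => commute_tensorPowersFactor (A := fun j => D.carrier (a j))) hgg hgF hhF hgh hs
    Φ.toAlgHom
  have hΦ := Φ.toLinearEquiv.finrank_eq
  simp only [Module.finrank_matrix, Module.finrank_tensorProduct, finrank_tensorPowers_carrier,
    Fintype.card_fin] at hΦ
  rw [D.finrank_carrier, D.degree_neg] at hCv
  rw [hS] at hv
  exact eq_sq_of_dvd Module.finrank_pos hs hy hδ hv hΦ hBv hCv

end DivisionSystem

section Lattice

lemma addOrderOf_intCast {n : ℕ} (hn : n ≠ 0) (c : ℤ) :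
    addOrderOf (c : ZMod n) = n / n.gcd c.natAbs := by
  rw [← ZMod.addOrderOf_coe _ hn]
  obtain ⟨m, rfl | rfl⟩ := c.eq_nat_or_neg <;> simp

open Multiplicative in
lemma index_ker_zpowersHom {n : ℕ} (hn : n ≠ 0) (c : ℤ) :
    (zpowersHom _ (ofAdd (c : ZMod n))).ker.index = n / n.gcd c.natAbs := by
  have : (zpowersHom _ (ofAdd (c : ZMod n))).range = Subgroup.zpowers (ofAdd (c : ZMod n)) := rfl
  rw [Subgroup.index_ker, this, Nat.card_zpowers, orderOf_ofAdd_eq_addOrderOf,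
    addOrderOf_intCast hn]

variable {ι : Type*}

/-- Coordinatewise reduction of the lexicographically ordered lattice `ℤ^ι`, written
multiplicatively, modulo `n i` in the coordinate `i`. -/
def reduction (n : ι → ℕ) :
    Lex (ι → Multiplicative ℤ) →* ∀ i, Multiplicative (ZMod (n i)) :=
  (MonoidHom.piMap fun i => (Int.castAddHom (ZMod (n i))).toMultiplicative).comp
    (ofLexMulEquiv _).toMonoidHom

lemma reduction_surjective (n : ι → ℕ) : Function.Surjective (reduction n) :=
  (Function.Surjective.piMap fun _ => ZMod.intCast_surjective).comp
    (ofLexMulEquiv (ι → Multiplicative ℤ)).surjective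

/-- The action of `ℤ^ι` on the lattice `ℤ^ι` by coordinatewise multiplication, the lattice being
written multiplicatively. -/
def coordinateZPow :
    Multiplicative (ι → ℤ) →* (Lex (ι → Multiplicative ℤ) →* Lex (ι → Multiplicative ℤ)) where
  toFun κ := (toLexMulEquiv _).toMonoidHom.comp <|
    (MonoidHom.piMap fun i => zpowGroupHom (κ.toAdd i)).comp (ofLexMulEquiv _).toMonoidHom
  map_one' := MonoidHom.ext fun γ => funext fun i => zpow_zero (ofLex γ i)
  map_mul' _ _ := MonoidHom.ext fun γ => funext fun i => zpow_add (ofLex γ i) _ _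

lemma reduction_coordinateZPow (n : ι → ℕ) (κ : Multiplicative (ι → ℤ)) (γ) (i) :
    reduction n (coordinateZPow κ γ) i = reduction n γ i ^ κ.toAdd i :=
  map_zpow (Int.castAddHom (ZMod (n i))).toMultiplicative (ofLex γ i) _

lemma ker_reduction_le (n : ι → ℕ) (κ : Multiplicative (ι → ℤ)) :
    (reduction n).ker ≤ (reduction n).ker.comap (coordinateZPow κ) := fun γ hγ =>
  funext fun i => by
    rw [reduction_coordinateZPow, hγ, Pi.one_apply, one_zpow]

lemma comap_ker_reduction (n : ι → ℕ) (κ : ι → ℤ) :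
    (reduction n).ker.comap (coordinateZPow (.ofAdd κ)) =
      (Subgroup.pi Set.univ fun i =>
        (zpowersHom _ (Multiplicative.ofAdd (κ i : ZMod (n i)))).ker).comap
          (ofLexMulEquiv (ι → Multiplicative ℤ)).toMonoidHom := by
  ext γ
  have hγ (i) : reduction n (coordinateZPow (.ofAdd κ) γ) i =
      zpowersHom _ (Multiplicative.ofAdd (κ i : ZMod (n i))) (ofLex γ i) := by
    rw [reduction_coordinateZPow, zpowersHom_apply]
    change κ i • ((ofLex γ i).toAdd : ZMod (n i)) = (ofLex γ i).toAdd • (κ i : ZMod (n i))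
    simp only [zsmul_eq_mul, mul_comm]
  simp [Subgroup.mem_pi, funext_iff, hγ]

lemma index_comap_ker_reduction [Fintype ι] {n : ι → ℕ} (hn : ∀ i, 0 < n i) (κ : ι → ℤ) :
    ((reduction n).ker.comap (coordinateZPow (.ofAdd κ))).index =
      ∏ i, n i / (n i).gcd (κ i).natAbs := by
  rw [comap_ker_reduction, Subgroup.index_comap_of_surjective _ (ofLexMulEquiv _).surjective,
    Subgroup.index_pi]
  exact Finset.prod_congr rfl fun i _ => index_ker_zpowersHom (hn i).ne' _

end Lattice

theorem DivisionSystem.exists_degree_eq_prod (k : Type u) [Field k] {ι : Type} [Fintype ι]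
    [LinearOrder ι] {n : ι → ℕ} (hn : ∀ i, 0 < n i) :
    ∃ (K : Type u) (_ : Field K) (_ : Algebra k K) (D : DivisionSystem K (ι → ℤ)),
      ∀ κ, D.degree κ = ∏ i, n i / (n i).gcd (κ i).natAbs := by
  have hnz (i) : NeZero (n i) := ⟨(hn i).ne'⟩
  obtain ⟨K, M, _, _, _, _, σ, τ, v, w, _, _, hσ, hker, hτ, h, hv⟩ :=
    exists_isRamified k (reduction_surjective n)
  have : τ.domain.FiniteIndex := by
    rw [hτ]
    infer_instance
  have hdom (κ) : (τ.comap (coordinateZPow κ)).domain =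
      (reduction n).ker.comap (coordinateZPow κ) :=
    congr_arg (Subgroup.comap (coordinateZPow κ)) hτ
  refine ⟨K, _, inferInstance, .ofRamified h hv hσ coordinateZPow fun κ => ?_, fun κ => ?_⟩
  · rw [hdom, hker]
    exact ker_reduction_le n κ
  · exact (congr_arg Subgroup.index (hdom _)).trans (index_comap_ker_reduction hn κ)

end BrauerIndex

theorem statement9 {k : Type u} [Field k] (r : ℕ) (hr : 1 ≤ r)
    (n : Fin r → ℕ) (hn : ∀ j, 0 < n j) :
    ∃ (K : Type u) (_ : Field K) (_ : Algebra k K)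
      (A : Fin r → Type u) (_ : ∀ j, DivisionRing (A j)) (_ : ∀ j, Algebra K (A j)),
      -- each `Aⱼ` is a central division algebra over `K` of degree `nⱼ`
      (∀ j, Algebra.IsCentral K (A j)) ∧
      (∀ j, Module.finrank K (A j) = (n j) ^ 2) ∧
      -- for all integers `κ₁,…,κ_r`, every central division algebra `B` over `K`
      -- representing the Brauer class `κ₁[A₁] + ⋯ + κ_r[A_r]` has degree
      -- `∏ⱼ nⱼ/gcd(nⱼ,κⱼ)`
      ∀ (κ : Fin r → ℤ) (B : Type u) [DivisionRing B] [Algebra K B]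
        [Algebra.IsCentral K B] [FiniteDimensional K B],
        (∃ s t : ℕ, 0 < s ∧ 0 < t ∧
          Nonempty
            (Matrix (Fin s) (Fin s)
                (B ⊗[K] (⨂[K] j, (⨂[K] (_ : Fin ((-(κ j)).toNat)), A j))) ≃ₐ[K]
              Matrix (Fin t) (Fin t)
                (⨂[K] j, (⨂[K] (_ : Fin ((κ j).toNat)), A j)))) →
        Module.finrank K B = (∏ j, n j / Nat.gcd (n j) (κ j).natAbs) ^ 2 := by
  obtain ⟨K, _, _, D, hD⟩ := BrauerIndex.DivisionSystem.exists_degree_eq_prod k hn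
  refine ⟨K, _, inferInstance, fun j => D.carrier (Pi.single j 1), inferInstance, inferInstance,
    inferInstance, fun j => ?_, fun κ B _ _ _ _ ⟨s, t, hs, _, ⟨Φ⟩⟩ => ?_⟩
  · rw [D.finrank_carrier, hD, Finset.prod_eq_single j]
    · simp
    · intro i _ hij
      simp [hij, Nat.div_self (hn i)]
    · simp
  · have hκ : ∑ j, (((κ j).toNat : ℤ) - (-κ j).toNat) • Pi.single j (1 : ℤ) = κ := by
      simp_rw [Int.toNat_sub_toNat_neg, ← Pi.single_smul]
      simp [Finset.univ_sum_single]
    rw [D.finrank_eq_degree_sq _ _ _ hs Φ, hκ, hD]
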